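/- arXiv:1901.10789 — 4 statements merged into one kernel-verified Lean document; each statement's English description precedes it below -/
import Mathlib

section
/- There exists a universal constant C > 0 such that for all positive integers n, m, every matrix U ∈ [−1,1]^{n×m}, every vector w ∈ ℝ^m with ‖w‖₁ = 1, and every positive integer T ≤ m, there exists a vector w' ∈ ℝ^m with ‖w'‖₁ = 1, ‖w'‖₀ ≤ T, and ‖Uw − Uw'‖_∞ ≤ C·√(log(2 + n/T)/T). -/
open Finset
open scoped Classical

/-!
The proof is the entropy method for partial colorings. For random signs `ε` on a set `S` on which
every row of `a` has small variance, round each sum `∑ i, a j i * ε i` to a grid whose mesh exceeds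
its standard deviation by a suitable logarithmic factor. The rounded vector has entropy below
`#S / 5`, so one of its fibers is too large for a Hamming ball of radius `#S / 10`, and half the
difference of two far apart members is a coloring `χ ∈ {-1, 0, 1}^S` with many nonzero entries and
small sums `∑ i, a j i * χ i`.

Apply this to the rows of `U`, weighted by `w`, on the small coordinates of `w`. Replacing `w` by
`w * (1 + χ)` kills every coordinate where `χ = -1`, a constant fraction of the support, and changes
`U *ᵥ w` by `O(√(log (2 + n / k) / k))` if `w` has support size `k`; an extra row `|w|` makes the
`ℓ¹` norm change by no more than that, and normalization repairs it. Iterating, the errors grow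
geometrically while `k` decreases to `T`, so the last one dominates their sum.
-/

namespace Sparsification

open Real
open scoped Matrix

section LargeFiber

variable {α β J κ : Type*}

-- By Gibbs' inequality the entropy of `f` is at most its mean cost `M` plus `log ∑ exp (-c)`, and
-- some fiber has probability at least `exp (-entropy)`.
lemma exists_card_mul_exp_neg_le_card_fiber [DecidableEq β] {s : Finset α} (hs : s.Nonempty)
    (f : α → β) (c : β → ℝ) {M : ℝ} (hM : ∑ x ∈ s, c (f x) ≤ #s * M) :
    ∃ b, #s * exp (-M) ≤ #{x ∈ s | f x = b} * ∑ b' ∈ s.image f, exp (-c b') := by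
  obtain ⟨b, -, hb⟩ := exists_max_image (s.image f) (fun b => #{x ∈ s | f x = b}) (hs.image f)
  refine ⟨b, ?_⟩
  -- Jensen's inequality for `exp`, through its tangent at `-M`.
  have tangent : ∀ x, exp (-M) * (1 + (M - c (f x))) ≤ exp (-c (f x)) := fun x => by
    calc exp (-M) * (1 + (M - c (f x)))
        ≤ exp (-M) * exp (M - c (f x)) := by gcongr; linarith [add_one_le_exp (M - c (f x))]
      _ = exp (-c (f x)) := by rw [← exp_add]; congr 1; ring
  calc #s * exp (-M)
      ≤ exp (-M) * (#s + (#s * M - ∑ x ∈ s, c (f x))) := by nlinarith [exp_pos (-M)]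
    _ = ∑ x ∈ s, exp (-M) * (1 + (M - c (f x))) := by
        simp only [← mul_sum, sum_add_distrib, sum_sub_distrib, sum_const, nsmul_eq_mul, mul_one]
    _ ≤ ∑ x ∈ s, exp (-c (f x)) := sum_le_sum fun x _ => tangent x
    _ = ∑ b' ∈ s.image f, #{x ∈ s | f x = b'} * exp (-c b') := by
        rw [sum_comp (fun b => exp (-c b)) f]
        simp only [nsmul_eq_mul]
    _ ≤ ∑ b' ∈ s.image f, #{x ∈ s | f x = b} * exp (-c b') := by
        refine sum_le_sum fun b' hb' => ?_
        have := hb b' hb'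
        gcongr
    _ = #{x ∈ s | f x = b} * ∑ b' ∈ s.image f, exp (-c b') := (mul_sum ..).symm

lemma sum_prod_le_pow_card [Fintype J] {g : κ → ℝ} (hg : ∀ v, 0 ≤ g v) {Z : ℝ}
    (hZ : ∀ t : Finset κ, ∑ v ∈ t, g v ≤ Z) (s : Finset (J → κ)) :
    ∑ b ∈ s, ∏ j, g (b j) ≤ Z ^ Fintype.card J := by
  have hsub : s ⊆ Fintype.piFinset fun j => s.image (· j) := fun b hb =>
    Fintype.mem_piFinset.mpr fun j => mem_image_of_mem (· j) hb
  calc ∑ b ∈ s, ∏ j, g (b j)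
      ≤ ∑ b ∈ Fintype.piFinset fun j => s.image (· j), ∏ j, g (b j) :=
        sum_le_sum_of_subset_of_nonneg hsub fun b _ _ => prod_nonneg fun j _ => hg (b j)
    _ = ∏ j, ∑ v ∈ s.image (· j), g v := (prod_univ_sum _ fun _ => g).symm
    _ ≤ ∏ _j : J, Z := prod_le_prod (fun j _ => sum_nonneg fun v _ => hg v) fun j _ => hZ _
    _ = Z ^ Fintype.card J := by rw [prod_const, card_univ]

lemma hasSum_pow_natAbs {r : ℝ} (hr0 : 0 ≤ r) (hr1 : r < 1) :
    HasSum (fun v : ℤ => r ^ v.natAbs) ((1 + r) / (1 - r)) := by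
  have hpos : HasSum (fun n : ℕ => r ^ (n : ℤ).natAbs) (1 - r)⁻¹ := by
    simpa only [Int.natAbs_natCast] using hasSum_geometric_of_lt_one hr0 hr1
  have hneg : HasSum (fun n : ℕ => r ^ (-((n : ℤ) + 1)).natAbs) (r * (1 - r)⁻¹) := by
    have hnat : ∀ n : ℕ, (-((n : ℤ) + 1)).natAbs = n + 1 := fun n => by omega
    simpa only [hnat, pow_succ'] using (hasSum_geometric_of_lt_one hr0 hr1).mul_left r
  rw [div_eq_mul_inv, add_mul, one_mul]
  exact hpos.of_nat_of_neg_add_one hneg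

lemma sum_exp_neg_mul_abs_le {θ : ℝ} (hθ : exp (-θ) ≤ 1 / 3) (t : Finset ℤ) :
    ∑ v ∈ t, exp (-(θ * |(v : ℝ)|)) ≤ exp (3 * exp (-θ)) := by
  set r := exp (-θ) with hr
  have hr0 : 0 < r := exp_pos _
  have hterm : ∀ v : ℤ, exp (-(θ * |(v : ℝ)|)) = r ^ v.natAbs := fun v => by
    rw [hr, ← exp_nat_mul, Nat.cast_natAbs, Int.cast_abs]
    congr 1; ring
  calc ∑ v ∈ t, exp (-(θ * |(v : ℝ)|)) = ∑ v ∈ t, r ^ v.natAbs := by simp only [hterm]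
    _ ≤ (1 + r) / (1 - r) :=
        sum_le_hasSum t (fun v _ => by positivity) (hasSum_pow_natAbs hr0.le (by linarith))
    _ ≤ 3 * r + 1 := by rw [div_le_iff₀ (by linarith)]; nlinarith
    _ ≤ exp (3 * r) := add_one_le_exp _

lemma exists_large_fiber_int [Fintype J] {s : Finset α} (hs : s.Nonempty) (f : α → J → ℤ)
    {θ M : ℝ} (hθ : exp (-θ) ≤ 1 / 3) (hM : ∑ x ∈ s, ∑ j, |(f x j : ℝ)| ≤ #s * M) :
    ∃ b, #s * exp (-(θ * M + 3 * exp (-θ) * Fintype.card J)) ≤ #{x ∈ s | f x = b} := by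
  have hθ0 : 0 ≤ θ := by
    rw [← neg_nonpos, ← exp_le_one_iff]
    linarith
  have hcost : ∑ x ∈ s, θ * ∑ j, |(f x j : ℝ)| ≤ #s * (θ * M) := by
    rw [← mul_sum, mul_left_comm]
    gcongr
  obtain ⟨b, hb⟩ :=
    exists_card_mul_exp_neg_le_card_fiber hs f (fun b => θ * ∑ j, |(b j : ℝ)|) hcost
  refine ⟨b, ?_⟩
  have hZ : ∑ b' ∈ s.image f, exp (-(θ * ∑ j, |(b' j : ℝ)|)) ≤
      exp (3 * exp (-θ)) ^ Fintype.card J := by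
    simpa only [mul_sum, ← sum_neg_distrib, exp_sum] using
      sum_prod_le_pow_card (fun v : ℤ => (exp_pos (-(θ * |(v : ℝ)|))).le)
        (sum_exp_neg_mul_abs_le hθ) (s.image f)
  rw [neg_add, exp_add, ← mul_assoc, exp_neg (3 * exp (-θ) * _), ← div_eq_mul_inv,
    div_le_iff₀ (exp_pos _), mul_comm (3 * exp (-θ)), exp_nat_mul]
  exact hb.trans (mul_le_mul_of_nonneg_left hZ (Nat.cast_nonneg _))

end LargeFiber

section SignVectors

variable {ι : Type*} [Fintype ι]

/-- The Rademacher sign vectors on `S`. They are extended by `0` outside `S`, so that one ambient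
index type serves every `S`. -/
noncomputable def signVectors (S : Finset ι) : Finset (ι → ℝ) :=
  Fintype.piFinset fun i => if i ∈ S then {1, -1} else {0}

variable {S : Finset ι}

lemma signVectors_apply_mem {ε : ι → ℝ} (hε : ε ∈ signVectors S) {i : ι} (hi : i ∈ S) :
    ε i = 1 ∨ ε i = -1 := by
  simpa [hi] using Fintype.mem_piFinset.mp hε i

lemma signVectors_apply_notMem {ε : ι → ℝ} (hε : ε ∈ signVectors S) {i : ι} (hi : i ∉ S) :
    ε i = 0 := by
  simpa [hi] using Fintype.mem_piFinset.mp hε i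

lemma sum_signVectors_prod (g : ι → ℝ → ℝ) (hg : ∀ i ∉ S, g i 0 = 1) :
    ∑ ε ∈ signVectors S, ∏ i, g i (ε i) = ∏ i ∈ S, (g i 1 + g i (-1)) := by
  rw [signVectors, ← prod_univ_sum, ← prod_subset (subset_univ S)]
  · refine prod_congr rfl fun i hi => ?_
    rw [if_pos hi, sum_pair (by norm_num)]
  · intro i _ hi
    rw [if_neg hi, sum_singleton, hg i hi]

lemma card_signVectors (S : Finset ι) : #(signVectors S) = 2 ^ #S := by
  have := sum_signVectors_prod (S := S) (fun _ _ => (1 : ℝ)) fun _ _ => rfl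
  norm_num at this
  exact_mod_cast this

lemma sum_exp_signVectors_le (a : ι → ℝ) :
    ∑ ε ∈ signVectors S, exp (∑ i, a i * ε i) ≤
      #(signVectors S) * exp ((∑ i ∈ S, a i ^ 2) / 2) := by
  calc ∑ ε ∈ signVectors S, exp (∑ i, a i * ε i)
      = ∏ i ∈ S, (exp (a i * 1) + exp (a i * -1)) := by
        simp only [exp_sum]
        exact sum_signVectors_prod (fun i v => exp (a i * v)) fun i _ => by simp
    _ = ∏ i ∈ S, 2 * cosh (a i) := by
        refine prod_congr rfl fun i _ => ?_
        rw [cosh_eq, mul_one, mul_neg_one]; ring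
    _ ≤ ∏ i ∈ S, 2 * exp (a i ^ 2 / 2) := by
        gcongr with i
        exact cosh_le_exp_half_sq (a i)
    _ = #(signVectors S) * exp ((∑ i ∈ S, a i ^ 2) / 2) := by
        rw [prod_mul_distrib, prod_const, sum_div, exp_sum, card_signVectors]
        norm_num

lemma sum_cosh_signVectors_le (a : ι → ℝ) :
    ∑ ε ∈ signVectors S, cosh (∑ i, a i * ε i) ≤
      #(signVectors S) * exp ((∑ i ∈ S, a i ^ 2) / 2) := by
  have hpos := sum_exp_signVectors_le (S := S) a
  have hneg := sum_exp_signVectors_le (S := S) (-a)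
  simp only [Pi.neg_apply, neg_mul, sum_neg_distrib, neg_sq] at hneg
  simp only [cosh_eq, ← sum_div, sum_add_distrib]
  linarith

lemma abs_round_le_exp_mul_cosh {θ : ℝ} (hθ : 1 ≤ θ) (y : ℝ) :
    |(round y : ℝ)| ≤ 2 * exp (-θ) * cosh (2 * θ * y) := by
  rcases eq_or_ne (round y) 0 with h0 | h0
  · rw [h0, Int.cast_zero, abs_zero]
    have := cosh_pos (2 * θ * y)
    positivity
  have hone : 1 ≤ |(round y : ℝ)| := mod_cast Int.one_le_abs h0
  have hround : |(round y : ℝ)| ≤ |y| + 1 / 2 := by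
    have := abs_sub_abs_le_abs_sub (round y : ℝ) y
    rw [abs_sub_comm] at this
    linarith [abs_sub_round y]
  calc |(round y : ℝ)| ≤ (2 * |y| - 1) + 1 := by linarith
    _ ≤ exp (2 * |y| - 1) := add_one_le_exp _
    _ ≤ exp (-θ + 2 * θ * |y|) := by gcongr; nlinarith
    _ = exp (-θ) * exp |2 * θ * y| := by
        rw [exp_add, abs_mul, abs_of_pos (by linarith : 0 < 2 * θ)]
    _ ≤ exp (-θ) * (2 * cosh (2 * θ * y)) := by
        gcongr
        linarith [exp_abs_le (2 * θ * y), cosh_eq (2 * θ * y)]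
    _ = 2 * exp (-θ) * cosh (2 * θ * y) := by ring

lemma sum_abs_round_signVectors_le (a : ι → ℝ) {v l : ℝ} (hv : 0 < v) (hl : 0 < l)
    (hav : ∑ i ∈ S, a i ^ 2 ≤ v) (hvl : v ≤ l ^ 2) :
    ∑ ε ∈ signVectors S, |(round ((∑ i, a i * ε i) / (2 * l)) : ℝ)| ≤
      #(signVectors S) * (2 * exp (-(l ^ 2 / (2 * v)))) := by
  have hθ : 1 ≤ l ^ 2 / v := (one_le_div hv).mpr hvl
  have hscale : ∀ ε : ι → ℝ, 2 * (l ^ 2 / v) * ((∑ i, a i * ε i) / (2 * l)) =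
      ∑ i, l / v * a i * ε i := fun ε => by
    simp only [mul_assoc, ← mul_sum]
    field_simp
  have hvar : (∑ i ∈ S, (l / v * a i) ^ 2) / 2 ≤ l ^ 2 / (2 * v) := by
    simp only [mul_pow, ← mul_sum]
    calc (l / v) ^ 2 * (∑ i ∈ S, a i ^ 2) / 2 ≤ (l / v) ^ 2 * v / 2 := by gcongr
      _ = l ^ 2 / (2 * v) := by field_simp
  calc ∑ ε ∈ signVectors S, |(round ((∑ i, a i * ε i) / (2 * l)) : ℝ)|
      ≤ ∑ ε ∈ signVectors S, 2 * exp (-(l ^ 2 / v)) * cosh (∑ i, l / v * a i * ε i) :=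
        sum_le_sum fun ε _ => hscale ε ▸ abs_round_le_exp_mul_cosh hθ _
    _ ≤ 2 * exp (-(l ^ 2 / v)) * (#(signVectors S) * exp (l ^ 2 / (2 * v))) := by
        rw [← mul_sum]
        gcongr
        exact (sum_cosh_signVectors_le _).trans (by gcongr)
    _ = #(signVectors S) * (2 * (exp (-(l ^ 2 / v)) * exp (l ^ 2 / (2 * v)))) := by ring
    _ = #(signVectors S) * (2 * exp (-(l ^ 2 / (2 * v)))) := by
        rw [← exp_add]
        congr 3
        field_simp
        ring

lemma sum_exp_neg_hammingDist_signVectors_le {y : ι → ℝ} (hy : y ∈ signVectors S) (t : ℝ) :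
    ∑ x ∈ signVectors S, exp (-(t * hammingDist x y)) ≤ exp (#S * exp (-t)) := by
  let g : ι → ℝ → ℝ := fun i v => if v ≠ y i then exp (-t) else 1
  have hterm : ∀ x : ι → ℝ, exp (-(t * hammingDist x y)) = ∏ i, g i (x i) := fun x => by
    rw [prod_ite, prod_const_one, mul_one, prod_const, ← exp_nat_mul, hammingDist]
    congr 1; ring
  calc ∑ x ∈ signVectors S, exp (-(t * hammingDist x y))
      = ∏ i ∈ S, (g i 1 + g i (-1)) := by
        simp only [hterm]
        exact sum_signVectors_prod g fun i hi => by simp [g, signVectors_apply_notMem hy hi]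
    _ = ∏ _i ∈ S, (exp (-t) + 1) := prod_congr rfl fun i hi => by
        rcases signVectors_apply_mem hy hi with h | h <;> norm_num [g, h, add_comm]
    _ ≤ ∏ _i ∈ S, exp (exp (-t)) := by
        gcongr
        exact add_one_le_exp _
    _ = exp (#S * exp (-t)) := by rw [prod_const, exp_nat_mul]

lemma card_le_exp_of_hammingDist_le {A : Finset (ι → ℝ)} (hA : A ⊆ signVectors S) {y : ι → ℝ}
    (hy : y ∈ signVectors S) {t d : ℝ} (ht : 0 ≤ t) (hd : ∀ x ∈ A, hammingDist x y ≤ d) :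
    #A ≤ exp (t * d + #S * exp (-t)) := by
  have hsum : #A * exp (-(t * d)) ≤ exp (#S * exp (-t)) := by
    rw [← nsmul_eq_mul]
    calc #A • exp (-(t * d)) ≤ ∑ x ∈ A, exp (-(t * hammingDist x y)) :=
          card_nsmul_le_sum _ _ _ fun x hx => by gcongr; exact hd x hx
      _ ≤ ∑ x ∈ signVectors S, exp (-(t * hammingDist x y)) :=
          sum_le_sum_of_subset_of_nonneg hA fun _ _ _ => (exp_pos _).le
      _ ≤ exp (#S * exp (-t)) := sum_exp_neg_hammingDist_signVectors_le hy t
  rwa [exp_neg, ← div_eq_mul_inv, div_le_iff₀ (exp_pos _), ← exp_add, add_comm] at hsum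

lemma exists_hammingDist_ge {A : Finset (ι → ℝ)} (hA : A ⊆ signVectors S) (hS : S.Nonempty)
    (hcard : #(signVectors S) * exp (-(#S / 5)) ≤ #A) :
    ∃ x ∈ A, ∃ y ∈ A, (#S : ℝ) / 10 ≤ hammingDist x y := by
  have hSpos : (0 : ℝ) < #S := mod_cast hS.card_pos
  have hpow : (#(signVectors S) : ℝ) = exp (#S * log 2) := by
    rw [card_signVectors, exp_nat_mul, exp_log two_pos, Nat.cast_pow, Nat.cast_ofNat]
  rw [hpow, ← exp_add] at hcard
  obtain ⟨y, hy⟩ : A.Nonempty := card_pos.mp (mod_cast (exp_pos _).trans_le hcard)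
  by_contra! hfar
  have hball := card_le_exp_of_hammingDist_le hA (hA hy) zero_le_two fun x hx =>
    (hfar x hx y hy).le
  have hexp2 : exp (-2) ≤ 1 / 5 := by
    rw [exp_neg, inv_le_comm₀ (exp_pos _) (by norm_num), show (2 : ℝ) = 1 + 1 by norm_num, exp_add]
    nlinarith [exp_one_gt_d9]
  have := exp_le_exp.mp (hcard.trans hball)
  nlinarith [log_two_gt_d9]

lemma signVectors_nonempty (S : Finset ι) : (signVectors S).Nonempty := by
  rw [← card_pos, card_signVectors]
  positivity

end SignVectors

section PartialColoring

variable {ι : Type*} {S : Finset ι}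

/-- A partial coloring of `S`: a vector with entries in `{-1, 0, 1}` that vanishes outside `S`.
The indices where it is `±1` are the ones it colors. -/
structure IsPartialColoring (S : Finset ι) (χ : ι → ℝ) : Prop where
  mem : ∀ i, χ i = -1 ∨ χ i = 0 ∨ χ i = 1
  eq_zero : ∀ i ∉ S, χ i = 0

lemma IsPartialColoring.neg {χ : ι → ℝ} (hχ : IsPartialColoring S χ) :
    IsPartialColoring S (-χ) where
  mem i := by
    rcases hχ.mem i with h | h | h <;> simp [h]
  eq_zero i hi := by rw [Pi.neg_apply, hχ.eq_zero i hi, neg_zero]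

lemma IsPartialColoring.mono {S' : Finset ι} {χ : ι → ℝ} (hχ : IsPartialColoring S χ)
    (hS : S ⊆ S') : IsPartialColoring S' χ where
  mem := hχ.mem
  eq_zero i hi := hχ.eq_zero i (mt (@hS i) hi)

lemma IsPartialColoring.neg_one_le {χ : ι → ℝ} (hχ : IsPartialColoring S χ) (i : ι) :
    -1 ≤ χ i := by
  rcases hχ.mem i with h | h | h <;> norm_num [h]

lemma IsPartialColoring.hammingNorm_le [Fintype ι] {χ : ι → ℝ} (hχ : IsPartialColoring S χ) :
    hammingNorm χ ≤ #{i | χ i = 1} + #{i | χ i = -1} := by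
  refine (card_le_card fun i hi => ?_).trans (card_union_le _ _)
  simp only [mem_filter_univ, mem_union] at hi ⊢
  rcases hχ.mem i with h | h | h
  exacts [Or.inr h, absurd h hi, Or.inl h]

lemma isPartialColoring_half_sub [Fintype ι] {ε ε' : ι → ℝ} (hε : ε ∈ signVectors S)
    (hε' : ε' ∈ signVectors S) : IsPartialColoring S ((1 / 2 : ℝ) • (ε - ε')) where
  mem i := by
    by_cases hi : i ∈ S
    · rcases signVectors_apply_mem hε hi with h | h <;>
        rcases signVectors_apply_mem hε' hi with h' | h' <;> norm_num [h, h']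
    · refine Or.inr (Or.inl ?_)
      simp [signVectors_apply_notMem hε hi, signVectors_apply_notMem hε' hi]
  eq_zero i hi := by
    simp [signVectors_apply_notMem hε hi, signVectors_apply_notMem hε' hi]

end PartialColoring

section Discrepancy

variable {ι J : Type*} [Fintype ι] [Fintype J] {S : Finset ι}

lemma abs_sub_le_of_round_div_eq {x y l : ℝ} (hl : 0 < l) (h : round (x / l) = round (y / l)) :
    |x - y| ≤ l := by
  have hx := abs_sub_round (x / l)
  have hy := abs_sub_round (y / l)
  rw [h] at hx
  have hxy : |x / l - y / l| ≤ 1 := by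
    rw [abs_le] at hx hy ⊢
    constructor <;> linarith
  rwa [← sub_div, abs_div, abs_of_pos hl, div_le_one hl] at hxy

-- Here `s = #S` and `N` is the number of rows. The left-hand side is the entropy bound of
-- `exists_large_fiber_int` for `θ = log (30 * ρ)`, with mean total size `N * (2 * (ρ ^ 12)⁻¹)`.
lemma entropy_le_div_five {s N ρ : ℝ} (hN : 0 ≤ N) (hρ : 2 ≤ ρ) (hNρ : N ≤ s * ρ) :
    log (30 * ρ) * (N * (2 * (ρ ^ 12)⁻¹)) + 3 * exp (-log (30 * ρ)) * N ≤ s / 5 := by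
  have hρ0 : 0 < ρ := by linarith
  have hs : 0 ≤ s := nonneg_of_mul_nonneg_left (hN.trans hNρ) hρ0
  have hmean : log (30 * ρ) * (N * (2 * (ρ ^ 12)⁻¹)) ≤ s / 10 := by
    calc log (30 * ρ) * (N * (2 * (ρ ^ 12)⁻¹))
        ≤ 30 * ρ * (s * ρ * (2 * (ρ ^ 12)⁻¹)) := by
          gcongr
          exact log_le_self (by positivity)
      _ = 60 * s / ρ ^ 10 := by field_simp; ring
      _ ≤ 60 * s / 2 ^ 10 := by gcongr
      _ ≤ s / 10 := by linarith
  have hpartition : 3 * exp (-log (30 * ρ)) * N ≤ s / 10 := by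
    rw [exp_neg, exp_log (by positivity)]
    calc 3 * (30 * ρ)⁻¹ * N ≤ 3 * (30 * ρ)⁻¹ * (s * ρ) := by gcongr
      _ = s / 10 := by field_simp; ring
  linarith

lemma sum_sum_abs_round_signVectors_le (a : J → ι → ℝ) {v ρ : ℝ} (hv : 0 < v) (hρ : 2 ≤ ρ)
    (hav : ∀ j, ∑ i ∈ S, a j i ^ 2 ≤ v) :
    ∑ ε ∈ signVectors S, ∑ j, |(round ((∑ i, a j i * ε i) / (2 * √(24 * v * log ρ))) : ℝ)| ≤
      #(signVectors S) * (Fintype.card J * (2 * (ρ ^ 12)⁻¹)) := by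
  have hlog : log 2 ≤ log ρ := log_le_log two_pos hρ
  have hlog2 := log_two_gt_d9
  have hlogρ : 0 < log ρ := by linarith
  have hl2 : √(24 * v * log ρ) ^ 2 = 24 * v * log ρ := sq_sqrt (by positivity)
  have htail : exp (-(√(24 * v * log ρ) ^ 2 / (2 * v))) = (ρ ^ 12)⁻¹ := by
    have : √(24 * v * log ρ) ^ 2 / (2 * v) = (12 : ℕ) * log ρ := by
      rw [hl2]
      field_simp
      norm_num
    rw [this, exp_neg, exp_nat_mul, exp_log (by linarith)]
  rw [sum_comm]
  calc ∑ j, ∑ ε ∈ signVectors S, |(round ((∑ i, a j i * ε i) / (2 * √(24 * v * log ρ))) : ℝ)|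
      ≤ ∑ _j : J, #(signVectors S) * (2 * (ρ ^ 12)⁻¹) := by
        gcongr with j
        rw [← htail]
        exact sum_abs_round_signVectors_le (a j) hv (by positivity) (hav j) (by nlinarith)
    _ = #(signVectors S) * (Fintype.card J * (2 * (ρ ^ 12)⁻¹)) := by
        rw [sum_const, card_univ, nsmul_eq_mul, mul_left_comm]

lemma exists_signVectors_hammingDist_ge_abs_sum_sub_le (hS : S.Nonempty) (a : J → ι → ℝ) {v : ℝ}
    (hv : 0 < v) (hav : ∀ j, ∑ i ∈ S, a j i ^ 2 ≤ v) :
    ∃ ε ∈ signVectors S, ∃ ε' ∈ signVectors S, (#S : ℝ) / 10 ≤ hammingDist ε ε' ∧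
      ∀ j, |∑ i, a j i * ε i - ∑ i, a j i * ε' i| ≤
        2 * √(24 * v * log (2 + Fintype.card J / #S)) := by
  have hSpos : (0 : ℝ) < #S := mod_cast hS.card_pos
  set ρ : ℝ := 2 + Fintype.card J / #S with hρ
  have hρ2 : 2 ≤ ρ := le_add_of_nonneg_right (by positivity)
  have hJρ : (Fintype.card J : ℝ) ≤ #S * ρ := by
    rw [hρ, mul_add, mul_div_cancel₀ _ hSpos.ne']
    linarith
  have hl : 0 < 2 * √(24 * v * log ρ) := by
    have := log_pos (by linarith : 1 < ρ)
    positivity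
  have hθ : exp (-log (30 * ρ)) ≤ 1 / 3 := by
    rw [exp_neg, exp_log (by linarith), ← one_div]
    exact one_div_le_one_div_of_le (by norm_num) (by linarith)
  obtain ⟨b, hb⟩ := exists_large_fiber_int (signVectors_nonempty S)
    (fun ε j => round ((∑ i, a j i * ε i) / (2 * √(24 * v * log ρ)))) hθ
    (sum_sum_abs_round_signVectors_le a hv hρ2 hav)
  obtain ⟨ε, hε, ε', hε', hfar⟩ := exists_hammingDist_ge (filter_subset _ _) hS <|
    le_trans (by gcongr; exact entropy_le_div_five (Nat.cast_nonneg _) hρ2 hJρ) hb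
  rw [mem_filter] at hε hε'
  exact ⟨ε, hε.1, ε', hε'.1, hfar, fun j =>
    abs_sub_le_of_round_div_eq hl (congrFun (hε.2.trans hε'.2.symm) j)⟩

lemma exists_isPartialColoring (hS : S.Nonempty) (a : J → ι → ℝ) {v : ℝ} (hv : 0 < v)
    (hav : ∀ j, ∑ i ∈ S, a j i ^ 2 ≤ v) :
    ∃ χ, IsPartialColoring S χ ∧ (#S : ℝ) / 10 ≤ hammingNorm χ ∧
      ∀ j, |∑ i, a j i * χ i| ≤ √(24 * v * log (2 + Fintype.card J / #S)) := by
  obtain ⟨ε, hε, ε', hε', hfar, hclose⟩ :=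
    exists_signVectors_hammingDist_ge_abs_sum_sub_le hS a hv hav
  refine ⟨(1 / 2 : ℝ) • (ε - ε'), isPartialColoring_half_sub hε hε', ?_, fun j => ?_⟩
  · rwa [hammingNorm_smul fun _ => IsSMulRegular.of_ne_zero (by norm_num), sub_eq_neg_add,
      ← hammingDist_eq_hammingNorm, hammingDist_comm]
  · have hhalf : ∑ i, a j i * ((1 / 2 : ℝ) • (ε - ε')) i =
        (∑ i, a j i * ε i - ∑ i, a j i * ε' i) / 2 := by
      rw [← sum_sub_distrib, sum_div]
      refine sum_congr rfl fun i _ => ?_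
      simp only [Pi.smul_apply, Pi.sub_apply, smul_eq_mul]
      ring
    rw [hhalf, abs_div, abs_two]
    linarith [hclose j]

lemma exists_isPartialColoring_card_neg_one_ge (hS : S.Nonempty) (a : J → ι → ℝ) {v : ℝ}
    (hv : 0 < v) (hav : ∀ j, ∑ i ∈ S, a j i ^ 2 ≤ v) :
    ∃ χ, IsPartialColoring S χ ∧ (#S : ℝ) / 20 ≤ #{i | χ i = -1} ∧
      ∀ j, |∑ i, a j i * χ i| ≤ √(24 * v * log (2 + Fintype.card J / #S)) := by
  obtain ⟨χ, hχ, hcard, hdisc⟩ := exists_isPartialColoring hS a hv hav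
  have hsplit : (hammingNorm χ : ℝ) ≤ #{i | χ i = 1} + #{i | χ i = -1} :=
    mod_cast hχ.hammingNorm_le
  rcases le_total (#{i | χ i = 1} : ℝ) #{i | χ i = -1} with h | h
  · exact ⟨χ, hχ, by linarith, hdisc⟩
  · refine ⟨-χ, hχ.neg, ?_, fun j => ?_⟩
    · simp only [Pi.neg_apply, neg_inj]
      linarith
    · simpa only [Pi.neg_apply, mul_neg, sum_neg_distrib, abs_neg] using hdisc j

end Discrepancy

section Sparsify

variable {ι J : Type*} [Fintype ι] [Fintype J]

lemma half_hammingNorm_le_card_small {w : ι → ℝ} (hw : ∑ j, |w j| ≤ 1) :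
    (hammingNorm w : ℝ) / 2 ≤ #{j | w j ≠ 0 ∧ hammingNorm w * |w j| ≤ 2} := by
  have hlarge : #{j | w j ≠ 0 ∧ ¬ hammingNorm w * |w j| ≤ 2} * (2 : ℝ) ≤ hammingNorm w := by
    rw [← nsmul_eq_mul]
    calc #{j | w j ≠ 0 ∧ ¬ hammingNorm w * |w j| ≤ 2} • (2 : ℝ)
        ≤ ∑ j with w j ≠ 0 ∧ ¬ hammingNorm w * |w j| ≤ 2, hammingNorm w * |w j| :=
          card_nsmul_le_sum _ _ _ fun j hj => (not_le.mp (mem_filter.mp hj).2.2).le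
      _ ≤ ∑ j, hammingNorm w * |w j| :=
          sum_le_sum_of_subset_of_nonneg (subset_univ _) fun j _ _ => by positivity
      _ ≤ hammingNorm w := by
          rw [← mul_sum]
          exact mul_le_of_le_one_right (Nat.cast_nonneg _) hw
  have hsplit : (#{j | w j ≠ 0 ∧ hammingNorm w * |w j| ≤ 2} : ℝ) +
      #{j | w j ≠ 0 ∧ ¬ hammingNorm w * |w j| ≤ 2} = hammingNorm w := by
    have := card_filter_add_card_filter_not (s := ({j | w j ≠ 0} : Finset ι))
      (fun j => hammingNorm w * |w j| ≤ 2)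
    rw [filter_filter, filter_filter] at this
    exact mod_cast this
  linarith

lemma exists_isPartialColoring_support {w : ι → ℝ} (hw0 : w ≠ 0) (hw : ∑ i, |w i| ≤ 1)
    {a : J → ι → ℝ} (haw : ∀ j i, |a j i| ≤ |w i|) :
    ∃ χ, IsPartialColoring {i | w i ≠ 0} χ ∧ (hammingNorm w : ℝ) / 40 ≤ #{i | χ i = -1} ∧
      ∀ j, |∑ i, a j i * χ i| ≤ √(24 * (2 / hammingNorm w) *
        log (2 + 2 * Fintype.card J / hammingNorm w)) := by
  set S : Finset ι := {i | w i ≠ 0 ∧ hammingNorm w * |w i| ≤ 2}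
  have hk : (0 : ℝ) < hammingNorm w := mod_cast hammingNorm_pos_iff.mpr hw0
  have hScard : (hammingNorm w : ℝ) / 2 ≤ #S := half_hammingNorm_le_card_small hw
  have hSne : S.Nonempty := card_pos.mp (Nat.cast_pos.mp ((half_pos hk).trans_le hScard))
  have hvar : ∀ j, ∑ i ∈ S, a j i ^ 2 ≤ 2 / hammingNorm w := fun j => by
    calc ∑ i ∈ S, a j i ^ 2 ≤ ∑ i ∈ S, 2 / hammingNorm w * |w i| := by
          refine sum_le_sum fun i hi => ?_
          have hsmall : |w i| ≤ 2 / hammingNorm w :=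
            (le_div_iff₀' hk).mpr (mem_filter.mp hi).2.2
          calc a j i ^ 2 ≤ |w i| * |w i| := by
                rw [← sq, sq_le_sq, abs_abs]
                exact haw j i
            _ ≤ 2 / hammingNorm w * |w i| := by gcongr
      _ ≤ ∑ i, 2 / hammingNorm w * |w i| :=
          sum_le_sum_of_subset_of_nonneg (subset_univ _) fun i _ _ => by positivity
      _ ≤ 2 / hammingNorm w := by
          rw [← mul_sum]
          exact mul_le_of_le_one_right (by positivity) hw
  obtain ⟨χ, hχ, hneg, hdisc⟩ :=
    exists_isPartialColoring_card_neg_one_ge hSne a (by positivity) hvar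
  refine ⟨χ, hχ.mono fun i hi => ?_, by linarith, fun j => (hdisc j).trans ?_⟩
  · exact mem_filter.mpr ⟨mem_univ i, (mem_filter.mp hi).2.1⟩
  · have hratio : (Fintype.card J : ℝ) / #S ≤ 2 * Fintype.card J / hammingNorm w := by
      calc (Fintype.card J : ℝ) / #S ≤ Fintype.card J / (hammingNorm w / 2) := by gcongr
        _ = 2 * Fintype.card J / hammingNorm w := by field_simp
    gcongr

lemma hammingNorm_mul_one_add_add_card_le {w χ : ι → ℝ}
    (hχ : IsPartialColoring {i | w i ≠ 0} χ) :
    hammingNorm (w * (1 + χ)) + #{i | χ i = -1} ≤ hammingNorm w := by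
  rw [hammingNorm, ← card_union_of_disjoint]
  · refine card_le_card fun i hi => ?_
    simp only [mem_union, mem_filter_univ, Pi.mul_apply] at hi ⊢
    rcases hi with hi | hi
    · exact left_ne_zero_of_mul hi
    · by_contra hw
      have := hχ.eq_zero i (by simpa using hw)
      norm_num [this] at hi
  · refine disjoint_filter.mpr fun i _ hi h => hi ?_
    simp [h]

/-- The error `√(log (2 + n / k) / k)` that a `k`-sparse vector achieves against `n` rows. -/
noncomputable def errorRate (n k : ℝ) : ℝ :=
  √(log (2 + n / k) / k)

lemma errorRate_nonneg (n k : ℝ) : 0 ≤ errorRate n k :=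
  sqrt_nonneg _

lemma errorRate_le_pow_mul {n k T q : ℝ} {p : ℕ} (hn : 0 ≤ n) (hT : 0 < T) (hq0 : 0 ≤ q)
    (hq1 : q ≤ 1) (hTk : T ≤ q ^ (2 * p) * k) : errorRate n k ≤ q ^ p * errorRate n T := by
  have hk : 0 < k := pos_of_mul_pos_right (hT.trans_le hTk) (by positivity)
  have hTk' : T ≤ k := hTk.trans (mul_le_of_le_one_left hk.le (pow_le_one₀ hq0 hq1))
  have hlog : 0 ≤ log (2 + n / T) := log_nonneg (by linarith [div_nonneg hn hT.le])
  refine sqrt_le_iff.mpr ⟨mul_nonneg (by positivity) (errorRate_nonneg n T), ?_⟩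
  calc log (2 + n / k) / k ≤ log (2 + n / T) / k := by gcongr
    _ ≤ q ^ (2 * p) * (log (2 + n / T) / T) := by
        rw [mul_div_assoc', div_le_div_iff₀ hk hT]
        nlinarith
    _ = (q ^ p * errorRate n T) ^ 2 := by
        rw [mul_pow, errorRate, sq_sqrt (by positivity), ← pow_mul, mul_comm p]

lemma sqrt_discrepancy_le_errorRate {n k : ℝ} (hn : 0 ≤ n) (hk : 1 ≤ k) :
    √(24 * (2 / k) * log (2 + 2 * (n + 1) / k)) ≤ 10 * errorRate n k := by
  have hlog : log (2 + 2 * (n + 1) / k) ≤ 2 * log (2 + n / k) := by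
    have hinv : 1 / k ≤ 1 := (div_le_one (by linarith)).mpr hk
    have hx : 0 ≤ n / k := by positivity
    calc log (2 + 2 * (n + 1) / k) = log (2 + 2 * (n / k) + 2 * (1 / k)) := by congr 1; ring
      _ ≤ log ((2 + n / k) ^ 2) := by gcongr; nlinarith
      _ = 2 * log (2 + n / k) := by rw [log_pow, Nat.cast_ofNat]
  have hlog0 : 0 ≤ log (2 + n / k) := log_nonneg (by linarith [show 0 ≤ n / k by positivity])
  have hten : (10 : ℝ) = √(10 ^ 2) := (sqrt_sq (by norm_num)).symm
  rw [errorRate, hten, ← sqrt_mul (by norm_num)]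
  apply sqrt_le_sqrt
  calc 24 * (2 / k) * log (2 + 2 * (n + 1) / k)
      ≤ 24 * (2 / k) * (2 * log (2 + n / k)) := by gcongr
    _ = 96 * (log (2 + n / k) / k) := by ring
    _ ≤ 10 ^ 2 * (log (2 + n / k) / k) := by gcongr; norm_num

lemma norm_mulVec_le_sum_abs {U : Matrix J ι ℝ} (hU : ∀ i j, |U i j| ≤ 1) (w : ι → ℝ) :
    ‖U *ᵥ w‖ ≤ ∑ j, |w j| := by
  refine (pi_norm_le_iff_of_nonneg (sum_nonneg fun j _ => abs_nonneg (w j))).mpr fun i => ?_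
  refine (abs_sum_le_sum_abs _ _).trans (sum_le_sum fun j _ => ?_)
  rw [abs_mul]
  exact mul_le_of_le_one_left (abs_nonneg _) (hU i j)

lemma exists_sparser_reweighting {U : Matrix J ι ℝ} (hU : ∀ i j, |U i j| ≤ 1) {w : ι → ℝ}
    (hw : ∑ j, |w j| = 1) :
    ∃ v : ι → ℝ, (hammingNorm v : ℝ) ≤ 39 / 40 * hammingNorm w ∧
      |∑ j, |v j| - 1| ≤ 10 * errorRate (Fintype.card J) (hammingNorm w) ∧
      ‖U *ᵥ w - U *ᵥ v‖ ≤ 10 * errorRate (Fintype.card J) (hammingNorm w) := by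
  have hw0 : w ≠ 0 := by
    rintro rfl
    simp at hw
  have hk : (1 : ℝ) ≤ hammingNorm w := mod_cast hammingNorm_pos_iff.mpr hw0
  -- The row `none` controls the change of the `ℓ¹` norm.
  let a : Option J → ι → ℝ := fun o j => o.elim |w j| fun i => U i j * w j
  have haw : ∀ o j, |a o j| ≤ |w j| := by
    rintro (_ | i) j
    · exact (abs_abs _).le
    · exact (abs_mul _ _).trans_le (mul_le_of_le_one_left (abs_nonneg _) (hU i j))
  obtain ⟨χ, hχ, hneg, hdisc⟩ := exists_isPartialColoring_support hw0 hw.le haw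
  rw [Fintype.card_option, Nat.cast_succ] at hdisc
  have hdisc' := fun o =>
    (hdisc o).trans (sqrt_discrepancy_le_errorRate (Nat.cast_nonneg (Fintype.card J)) hk)
  refine ⟨w * (1 + χ), ?_, ?_, ?_⟩
  · have : (hammingNorm (w * (1 + χ)) : ℝ) + #{i | χ i = -1} ≤ hammingNorm w :=
      mod_cast hammingNorm_mul_one_add_add_card_le hχ
    linarith
  · have hnorm : ∑ j, |(w * (1 + χ)) j| - 1 = ∑ j, a none j * χ j := by
      rw [← hw, ← sum_sub_distrib]
      refine sum_congr rfl fun j _ => ?_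
      have : 0 ≤ 1 + χ j := by linarith [hχ.neg_one_le j]
      simp only [Pi.mul_apply, Pi.add_apply, Pi.one_apply, abs_mul, abs_of_nonneg this, a,
        Option.elim]
      ring
    exact hnorm ▸ hdisc' none
  · refine (pi_norm_le_iff_of_nonneg 
      (mul_nonneg (by norm_num) (errorRate_nonneg _ _))).mpr fun i => ?_
    have hrow : (U *ᵥ w - U *ᵥ (w * (1 + χ))) i = -∑ j, a (some i) j * χ j := by
      simp only [Pi.sub_apply, Matrix.mulVec, dotProduct, ← sum_sub_distrib, ← sum_neg_distrib]
      refine sum_congr rfl fun j _ => ?_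
      simp only [Pi.mul_apply, Pi.add_apply, Pi.one_apply, a, Option.elim]
      ring
    rw [hrow, norm_neg]
    exact hdisc' (some i)

lemma exists_l1_normalization [Nonempty ι] (v : ι → ℝ) :
    ∃ w : ι → ℝ, ∑ j, |w j| = 1 ∧ hammingNorm w ≤ max 1 (hammingNorm v) ∧
      ∑ j, |v j - w j| = |∑ j, |v j| - 1| := by
  set σ := ∑ j, |v j|
  have hσ0 : 0 ≤ σ := sum_nonneg fun j _ => abs_nonneg (v j)
  rcases hσ0.eq_or_lt with hzero | hpos
  · obtain ⟨j₀⟩ := ‹Nonempty ι›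
    have hv : v = 0 := funext fun j => abs_eq_zero.mp <|
      (sum_eq_zero_iff_of_nonneg fun j _ => abs_nonneg (v j)).mp hzero.symm j (mem_univ j)
    have hone : ∑ j, |(Pi.single j₀ 1 : ι → ℝ) j| = 1 := by
      simp [Pi.single_apply, apply_ite abs]
    refine ⟨Pi.single j₀ 1, hone, le_max_of_le_left ?_, ?_⟩
    · simp [hammingNorm, Pi.single_apply, card_le_one]
    · simp [hv, hone, ← hzero]
  · refine ⟨σ⁻¹ • v, ?_, le_max_of_le_right hammingNorm_smul_le_hammingNorm, ?_⟩
    · simp only [Pi.smul_apply, smul_eq_mul, abs_mul, abs_of_pos (inv_pos.mpr hpos), ← mul_sum]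
      exact inv_mul_cancel₀ hpos.ne'
    · calc ∑ j, |v j - (σ⁻¹ • v) j| = ∑ j, |1 - σ⁻¹| * |v j| := by
            simp only [Pi.smul_apply, smul_eq_mul, ← abs_mul, sub_mul, one_mul]
        _ = |1 - σ⁻¹| * |σ| := by rw [← mul_sum, abs_of_nonneg hσ0]
        _ = |σ - 1| := by rw [← abs_mul, sub_mul, inv_mul_cancel₀ hpos.ne', one_mul]

lemma exists_sparser {U : Matrix J ι ℝ} (hU : ∀ i j, |U i j| ≤ 1) {w : ι → ℝ}
    (hw : ∑ j, |w j| = 1) (hk : 2 ≤ hammingNorm w) :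
    ∃ w' : ι → ℝ, ∑ j, |w' j| = 1 ∧ (hammingNorm w' : ℝ) ≤ 39 / 40 * hammingNorm w ∧
      ‖U *ᵥ w - U *ᵥ w'‖ ≤ 20 * errorRate (Fintype.card J) (hammingNorm w) := by
  obtain ⟨v, hcard, hnorm, hUv⟩ := exists_sparser_reweighting hU hw
  have : Nonempty ι := by
    by_contra! h
    simp at hw
  obtain ⟨w', hw', hcard', hvw'⟩ := exists_l1_normalization v
  refine ⟨w', hw', (Nat.cast_le.mpr hcard').trans ?_, ?_⟩
  · have hkR : (2 : ℝ) ≤ hammingNorm w := mod_cast hk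
    rw [Nat.cast_max, Nat.cast_one]
    exact max_le (by linarith) hcard
  · have hUw' : ‖U *ᵥ v - U *ᵥ w'‖ ≤ 10 * errorRate (Fintype.card J) (hammingNorm w) := by
      rw [← Matrix.mulVec_sub]
      exact (norm_mulVec_le_sum_abs hU (v - w')).trans (hvw'.trans_le hnorm)
    linarith [norm_sub_le_norm_sub_add_norm_sub (U *ᵥ w) (U *ᵥ v) (U *ᵥ w')]

lemma exists_sparse_of_pow_mul_hammingNorm_le {U : Matrix J ι ℝ} (hU : ∀ i j, |U i j| ≤ 1)
    {T : ℕ} (hT : 0 < T) (p : ℕ) {w : ι → ℝ} (hw : ∑ j, |w j| = 1)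
    (hwT : (99 / 100 : ℝ) ^ (2 * p) * hammingNorm w ≤ T) :
    ∃ w' : ι → ℝ, ∑ j, |w' j| = 1 ∧ hammingNorm w' ≤ T ∧
      ‖U *ᵥ w - U *ᵥ w'‖ ≤
        20 * errorRate (Fintype.card J) T * ∑ i ∈ range p, (99 / 100 : ℝ) ^ i := by
  induction p generalizing w with
  | zero => exact ⟨w, hw, by simpa using hwT, by simp⟩
  | succ p ih =>
    have hrate := errorRate_nonneg (Fintype.card J) T
    rw [sum_range_succ]
    rcases le_or_gt ((99 / 100 : ℝ) ^ (2 * p) * hammingNorm w) T with hle | hlt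
    · obtain ⟨w', hw', hcard, hUw'⟩ := ih hw hle
      exact ⟨w', hw', hcard, hUw'.trans (by gcongr; exact le_add_of_nonneg_right (by positivity))⟩
    have hTR : (0 : ℝ) < T := mod_cast hT
    have hTk : (T : ℝ) < hammingNorm w := hlt.trans_le <|
      mul_le_of_le_one_left (Nat.cast_nonneg _) (pow_le_one₀ (by norm_num) (by norm_num))
    have hk : T < hammingNorm w := mod_cast hTk
    obtain ⟨v, hv, hcard, hUv⟩ := exists_sparser hU hw (by omega)
    have hvT : (99 / 100 : ℝ) ^ (2 * p) * hammingNorm v ≤ T := by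
      calc (99 / 100 : ℝ) ^ (2 * p) * hammingNorm v
          ≤ (99 / 100) ^ (2 * p) * ((99 / 100) ^ 2 * hammingNorm w) := by gcongr; linarith
        _ ≤ T := by rwa [← mul_assoc, ← pow_add]
    obtain ⟨w', hw', hcard', hUw'⟩ := ih hv hvT
    have hround := errorRate_le_pow_mul (Nat.cast_nonneg (Fintype.card J)) hTR
      (by norm_num : (0 : ℝ) ≤ 99 / 100) (by norm_num) hlt.le
    refine ⟨w', hw', hcard', ?_⟩
    linarith [norm_sub_le_norm_sub_add_norm_sub (U *ᵥ w) (U *ᵥ v) (U *ᵥ w')]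

lemma exists_sparse {U : Matrix J ι ℝ} (hU : ∀ i j, |U i j| ≤ 1) {T : ℕ} (hT : 0 < T)
    {w : ι → ℝ} (hw : ∑ j, |w j| = 1) :
    ∃ w' : ι → ℝ, ∑ j, |w' j| = 1 ∧ hammingNorm w' ≤ T ∧
      ‖U *ᵥ w - U *ᵥ w'‖ ≤ 2000 * errorRate (Fintype.card J) T := by
  have hrate := errorRate_nonneg (Fintype.card J) T
  obtain ⟨p, hp⟩ : ∃ p : ℕ, (99 / 100 : ℝ) ^ (2 * p) * hammingNorm w ≤ T := by
    obtain ⟨p, hp⟩ := exists_pow_lt_of_lt_one (by positivity : 0 < (T : ℝ) / (hammingNorm w + 1))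
      (by norm_num : (99 / 100 : ℝ) ^ 2 < 1)
    rw [← pow_mul, lt_div_iff₀ (by positivity)] at hp
    exact ⟨p, le_trans (by gcongr; linarith) hp.le⟩
  obtain ⟨w', hw', hcard, hUw'⟩ := exists_sparse_of_pow_mul_hammingNorm_le hU hT p hw hp
  refine ⟨w', hw', hcard, ?_⟩
  have hgeom : ∑ i ∈ range p, (99 / 100 : ℝ) ^ i ≤ 100 := by
    have := geom_sum_mul_neg (99 / 100 : ℝ) p
    linarith [pow_nonneg (by norm_num : (0 : ℝ) ≤ 99 / 100) p]
  calc ‖U *ᵥ w - U *ᵥ w'‖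
      ≤ 20 * errorRate (Fintype.card J) T * ∑ i ∈ range p, (99 / 100 : ℝ) ^ i := hUw'
    _ ≤ 20 * errorRate (Fintype.card J) T * 100 := by gcongr
    _ = 2000 * errorRate (Fintype.card J) T := by ring

end Sparsify

end Sparsification

theorem sparsification_general {J ι : Type*} [Fintype J] [Fintype ι] {U : Matrix J ι ℝ}
    (hU : ∀ i j, |U i j| ≤ 1) {w : ι → ℝ} (hw : ∑ j, |w j| = 1) {T : ℕ} (hT : 0 < T) :
    ∃ w' : ι → ℝ, ∑ j, |w' j| = 1 ∧ #{j | w' j ≠ 0} ≤ T ∧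
      ∀ i, |U.mulVec w i - U.mulVec w' i| ≤
        2000 * √(Real.log (2 + Fintype.card J / T) / T) := by
  obtain ⟨w', hw', hcard, hUw'⟩ := Sparsification.exists_sparse hU hT hw
  exact ⟨w', hw', hcard, fun i => (norm_le_pi_norm (U.mulVec w - U.mulVec w') i).trans hUw'⟩

/-- Sparsification Theorem: for any matrix `U ∈ [-1,1]^{n×m}`, any `w` with `‖w‖₁ = 1`
and any positive `T ≤ m`, there is `w'` with `‖w'‖₁ = 1`, `‖w'‖₀ ≤ T` and
`‖Uw - Uw'‖_∞ ≤ C √(log(2 + n/T)/T)`. -/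
theorem sparsification :
    ∃ C : ℝ, 0 < C ∧
      ∀ (n m : ℕ), 0 < n → 0 < m →
        ∀ U : Matrix (Fin n) (Fin m) ℝ, (∀ i j, U i j ∈ Set.Icc (-1 : ℝ) 1) →
          ∀ w : Fin m → ℝ, (∑ j, |w j|) = 1 →
            ∀ T : ℕ, 0 < T → T ≤ m →
              ∃ w' : Fin m → ℝ,
                (∑ j, |w' j|) = 1 ∧
                (Finset.univ.filter (fun j => w' j ≠ 0)).card ≤ T ∧
                ∀ i, |U.mulVec w i - U.mulVec w' i| ≤
                  C * Real.sqrt (Real.log (2 + (n : ℝ) / (T : ℝ)) / (T : ℝ)) := by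
  refine ⟨2000, by norm_num, fun n m _ _ U hU w hw T hT _ => ?_⟩
  simpa using sparsification_general (fun i j => abs_le.mpr (hU i j)) hw hT
end

section
/- There exists a universal constant C > 0 such that for all positive integers n, m, every matrix U ∈ [−1,1]^{n×m}, every vector w ∈ ℝ^m with ‖w‖₁ = 1 and all coordinates of w nonnegative, and every positive integer T ≤ m, there exists a vector w' ∈ ℝ^m with all coordinates nonnegative, ‖w'‖₁ = 1, ‖w'‖₀ ≤ T, and ‖Uw − Uw'‖_∞ ≤ C·√(log(2 + n/T)/T). -/
open Finset
open scoped Classical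

/-!
For a matrix `V` whose rows have Euclidean norm at most `σ`, round the images `V ε` of all sign
vectors to a grid of side `4 σ √L`. The rounded image is rarely nonzero in any given coordinate, so
charging `L` per unit of its `ℓ¹` norm gives a small average energy, and Jensen's inequality
(`exp (-average energy) ≤ average of exp (-energy) ≤ (density of the largest fibre) * (partition
function)`) makes one fibre too large to lie in a Hamming ball of small radius. Half the difference of two distant
sign vectors in this fibre is a partial coloring `x` with `V x` small.

If `w` has `s` nonzero entries and total mass one, at least half of them are at most `2 / s`. Apply
the above to `U * diagonal w` on these light entries and replace `w` by `w * (1 + x)`: the entries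
with `x j = -1` vanish and nothing becomes negative. An extra row of ones keeps the total mass
close to one, so that renormalizing is cheap. Iterating, the support shrinks geometrically and the
costs `√(L / s)` form a geometric series dominated by its last term, where `s` is about `T`.
-/

open Real
open scoped BigOperators Matrix

theorem exp_expect_le_expect_exp {Ω : Type*} [Fintype Ω] [Nonempty Ω] (f : Ω → ℝ) :
    exp (𝔼 ω, f ω) ≤ 𝔼 ω, exp (f ω) := by
  have hcard : (Fintype.card Ω : ℝ) ≠ 0 := Nat.cast_ne_zero.2 Fintype.card_ne_zero
  simpa [Fintype.expect_eq_sum_div_card, sum_div, inv_mul_eq_div] using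
    convexOn_exp.map_sum_le (t := univ) (w := fun _ : Ω => (Fintype.card Ω : ℝ)⁻¹) (p := f)
      (fun _ _ => by positivity) (by simp [hcard]) fun _ _ => Set.mem_univ _

theorem abs_sub_le_one_of_round_eq {x y : ℝ} (h : round x = round y) : |x - y| ≤ 1 := by
  have hx := abs_sub_round x
  have hy := abs_sub_round y
  rw [← h, abs_sub_comm] at hy
  linarith [abs_sub_le x (round x) y]

theorem abs_round_le_exp_mul_cosh (y : ℝ) {a : ℝ} (ha : 1 ≤ a) :
    |(round y : ℝ)| ≤ 2 * exp (-(a / 2)) * cosh (a * y) := by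
  rcases eq_or_ne (round y) 0 with h | h
  · rw [h, Int.cast_zero, abs_zero]
    positivity
  have hround : (1 : ℝ) ≤ |(round y : ℝ)| := by exact_mod_cast Int.one_le_abs h
  have hy : |(round y : ℝ)| - 1 / 2 ≤ |y| := by
    have := abs_sub_abs_le_abs_sub (round y : ℝ) y
    rw [abs_sub_comm] at this
    linarith [abs_sub_round y]
  calc |(round y : ℝ)| ≤ a * (|y| - 1 / 2) + 1 := by nlinarith
    _ ≤ exp (a * (|y| - 1 / 2)) := add_one_le_exp _
    _ = exp (-(a / 2)) * exp (a * |y|) := by rw [← exp_add]; ring_nf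
    _ ≤ exp (-(a / 2)) * (2 * cosh (a * |y|)) := by
        gcongr
        rw [cosh_eq]
        linarith [exp_pos (-(a * |y|))]
    _ = 2 * exp (-(a / 2)) * cosh (a * y) := by
        rw [← cosh_abs (a * y), abs_mul, abs_of_pos (by linarith : 0 < a)]
        ring

theorem sum_pow_natAbs_le {r : ℝ} (hr₀ : 0 ≤ r) (hr₁ : r < 1) (s : Finset ℤ) :
    ∑ k ∈ s, r ^ k.natAbs ≤ (1 + r) / (1 - r) := by
  have hnonneg : HasSum (fun n : ℕ => r ^ (n : ℤ).natAbs) (1 - r)⁻¹ := by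
    simpa using hasSum_geometric_of_lt_one hr₀ hr₁
  have hneg : HasSum (fun n : ℕ => r ^ (-((n : ℤ) + 1)).natAbs) (r * (1 - r)⁻¹) := by
    simpa only [Int.natAbs_neg, ← Nat.cast_succ, Int.natAbs_natCast, pow_succ'] using
      (hasSum_geometric_of_lt_one hr₀ hr₁).mul_left r
  have hsum := HasSum.of_nat_of_neg_add_one (f := fun k : ℤ => r ^ k.natAbs) hnonneg hneg
  refine (sum_le_hasSum s (fun _ _ => by positivity) hsum).trans_eq ?_
  ring

theorem sum_prod_le_pow {ρ α : Type*} [Fintype ρ] {f : α → ℝ} (hf : ∀ a, 0 ≤ f a) {Z : ℝ}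
    (hZ : ∀ s : Finset α, ∑ a ∈ s, f a ≤ Z) (S : Finset (ρ → α)) :
    ∑ p ∈ S, ∏ i, f (p i) ≤ Z ^ Fintype.card ρ := by
  have hS : S ⊆ Fintype.piFinset fun i => S.image (· i) := fun p hp =>
    Fintype.mem_piFinset.2 fun i => mem_image_of_mem (· i) hp
  calc ∑ p ∈ S, ∏ i, f (p i)
      ≤ ∑ p ∈ Fintype.piFinset fun i => S.image (· i), ∏ i, f (p i) :=
        sum_le_sum_of_subset_of_nonneg hS fun p _ _ => prod_nonneg fun i _ => hf (p i)
    _ = ∏ i, ∑ a ∈ S.image (· i), f a := (prod_univ_sum _ _).symm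
    _ ≤ ∏ _i : ρ, Z :=
        prod_le_prod (fun i _ => sum_nonneg fun a _ => hf a) fun i _ => hZ _
    _ = Z ^ Fintype.card ρ := by rw [prod_const, card_univ]

theorem sum_exp_neg_sum_abs_le {ρ : Type*} [Fintype ρ] {L : ℝ} (hL : 1 ≤ L)
    (S : Finset (ρ → ℤ)) :
    ∑ p ∈ S, exp (-∑ i, L * |(p i : ℝ)|) ≤ exp (Fintype.card ρ * (4 * exp (-L))) := by
  have hr : exp (-L) ≤ 1 / 2 := by
    rw [exp_neg, ← one_div]
    exact one_div_le_one_div_of_le two_pos (by linarith [add_one_le_exp L])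
  have hr₀ := exp_pos (-L)
  have hZ : (1 + exp (-L)) / (1 - exp (-L)) ≤ exp (4 * exp (-L)) := by
    refine le_trans ?_ (add_one_le_exp _)
    rw [div_le_iff₀ (by linarith)]
    nlinarith
  have hweight (p : ρ → ℤ) : exp (-∑ i, L * |(p i : ℝ)|) = ∏ i, exp (-L) ^ (p i).natAbs := by
    simp only [← sum_neg_distrib, exp_sum, ← exp_nat_mul, Nat.cast_natAbs, Int.cast_abs]
    exact prod_congr rfl fun i _ => by ring_nf
  calc ∑ p ∈ S, exp (-∑ i, L * |(p i : ℝ)|) = ∑ p ∈ S, ∏ i, exp (-L) ^ (p i).natAbs :=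
        sum_congr rfl fun p _ => hweight p
    _ ≤ exp (4 * exp (-L)) ^ Fintype.card ρ :=
        sum_prod_le_pow (f := fun k : ℤ => exp (-L) ^ k.natAbs) (fun k => by positivity)
          (fun s => (sum_pow_natAbs_le hr₀.le (by linarith) s).trans hZ) S
    _ = exp (Fintype.card ρ * (4 * exp (-L))) := (exp_nat_mul _ _).symm

theorem exists_card_mul_exp_neg_expect_le {Ω β : Type*} [Fintype Ω] [Nonempty Ω]
    [DecidableEq β] (f : Ω → β) (E : β → ℝ) :
    ∃ ω₀, Fintype.card Ω * exp (-𝔼 ω, E (f ω)) ≤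
      #{ω | f ω = f ω₀} * ∑ b ∈ univ.image f, exp (-E b) := by
  obtain ⟨ω₀, hmax⟩ := Finite.exists_max fun ω₀ => #{ω | f ω = f ω₀}
  refine ⟨ω₀, ?_⟩
  have hJensen : exp (-𝔼 ω, E (f ω)) ≤ 𝔼 ω, exp (-E (f ω)) := by
    simpa only [expect_neg_distrib] using exp_expect_le_expect_exp fun ω => -E (f ω)
  calc Fintype.card Ω * exp (-𝔼 ω, E (f ω)) ≤ Fintype.card Ω * 𝔼 ω, exp (-E (f ω)) := by gcongr
    _ = ∑ ω, exp (-E (f ω)) := Fintype.card_mul_expect _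
    _ = ∑ b ∈ univ.image f, #{ω | f ω = b} * exp (-E b) := by
        simp only [sum_comp (fun b => exp (-E b)) f, nsmul_eq_mul]
    _ ≤ ∑ b ∈ univ.image f, #{ω | f ω = f ω₀} * exp (-E b) := by
        refine sum_le_sum fun b hb => ?_
        obtain ⟨ω, -, rfl⟩ := mem_image.1 hb
        exact mul_le_mul_of_nonneg_right (Nat.cast_le.2 (hmax ω)) (exp_pos _).le
    _ = #{ω | f ω = f ω₀} * ∑ b ∈ univ.image f, exp (-E b) := (mul_sum _ _ _).symm

theorem sum_pow_hammingDist {ι α R : Type*} [Fintype ι] [Fintype α] [DecidableEq α]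
    [CommRing R] (x : ι → α) (a : R) :
    ∑ y, a ^ hammingDist x y = (1 + (Fintype.card α - 1) * a) ^ Fintype.card ι := by
  have hcoord (c : α) : ∑ b, (if c ≠ b then a else 1) = 1 + (Fintype.card α - 1) * a := by
    rw [← add_sum_erase _ _ (mem_univ c), sum_congr rfl (g := fun _ => a)
      fun b hb => if_pos (ne_of_mem_erase hb).symm, if_neg (not_not.2 rfl), sum_const,
      card_erase_of_mem (mem_univ c), card_univ, nsmul_eq_mul,
      Nat.cast_pred (Fintype.card_pos_iff.2 ⟨c⟩)]
  calc ∑ y, a ^ hammingDist x y = ∑ y : ι → α, ∏ j, if x j ≠ y j then a else 1 := by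
        simp only [hammingDist, prod_ite, prod_const, one_pow, mul_one]
    _ = ∏ j, ∑ b, if x j ≠ b then a else 1 :=
        (Fintype.prod_sum fun j b => if x j ≠ b then a else 1).symm
    _ = (1 + (Fintype.card α - 1) * a) ^ Fintype.card ι := by
        simp only [hcoord, prod_const, card_univ]

theorem card_mul_pow_le_of_hammingDist_le {ι α : Type*} [Fintype ι] [Fintype α] [DecidableEq α]
    {x : ι → α} {d : ℕ} {F : Finset (ι → α)} (hF : ∀ y ∈ F, hammingDist x y ≤ d) {a : ℝ}
    (ha₀ : 0 ≤ a) (ha₁ : a ≤ 1) : #F * a ^ d ≤ (1 + (Fintype.card α - 1) * a) ^ Fintype.card ι :=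
  calc #F * a ^ d = ∑ _y ∈ F, a ^ d := by rw [sum_const, nsmul_eq_mul]
    _ ≤ ∑ y ∈ F, a ^ hammingDist x y :=
        sum_le_sum fun y hy => pow_le_pow_of_le_one ha₀ ha₁ (hF y hy)
    _ ≤ ∑ y, a ^ hammingDist x y :=
        sum_le_sum_of_subset_of_nonneg (subset_univ F) fun _ _ _ => by positivity
    _ = (1 + (Fintype.card α - 1) * a) ^ Fintype.card ι := sum_pow_hammingDist x a

/-- The real `±1` vector of a sign pattern `ε`. Sign patterns are functions into `ℤˣ`, so that the
uniform average over them is the finite expectation `𝔼 ε : ι → ℤˣ`. -/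
def signVec {ι : Type*} (ε : ι → ℤˣ) : ι → ℝ := fun j => ((ε j : ℤ) : ℝ)

theorem expect_exp_dotProduct_signVec {ι : Type*} [Fintype ι] (v : ι → ℝ) :
    𝔼 ε : ι → ℤˣ, exp (v ⬝ᵥ signVec ε) = ∏ j, cosh (v j) := by
  have hcoord (j : ι) : ∑ e : ℤˣ, exp (v j * ((e : ℤ) : ℝ)) = 2 * cosh (v j) := by
    rw [cosh_eq, UnitsInt.univ, sum_pair (by decide)]
    simp [mul_div_cancel₀]
  have hsum : ∑ ε : ι → ℤˣ, exp (v ⬝ᵥ signVec ε) = 2 ^ Fintype.card ι * ∏ j, cosh (v j) := by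
    simp only [dotProduct, signVec, exp_sum]
    rw [← Fintype.prod_sum fun j (e : ℤˣ) => exp (v j * ((e : ℤ) : ℝ))]
    simp only [hcoord, prod_mul_distrib, prod_const, card_univ]
  rw [Fintype.expect_eq_sum_div_card, hsum, Fintype.card_fun, Fintype.card_units_int]
  push_cast
  exact mul_div_cancel_left₀ _ (by positivity)

theorem expect_cosh_dotProduct_signVec_le {ι : Type*} [Fintype ι] (v : ι → ℝ) :
    𝔼 ε : ι → ℤˣ, cosh (v ⬝ᵥ signVec ε) ≤ exp ((∑ j, v j ^ 2) / 2) := by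
  have hcosh : 𝔼 ε : ι → ℤˣ, cosh (v ⬝ᵥ signVec ε) = ∏ j, cosh (v j) := by
    have hneg := expect_exp_dotProduct_signVec (-v)
    simp only [neg_dotProduct, Pi.neg_apply, cosh_neg] at hneg
    simp only [cosh_eq (_ ⬝ᵥ _), ← expect_div, expect_add_distrib, hneg,
      expect_exp_dotProduct_signVec, add_self_div_two]
  rw [hcosh, sum_div, exp_sum]
  exact prod_le_prod (fun j _ => (cosh_pos _).le) fun j _ => cosh_le_exp_half_sq _

theorem expect_abs_round_dotProduct_signVec_le {ι : Type*} [Fintype ι] {v : ι → ℝ} {σ L : ℝ}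
    (hσ : 0 < σ) (hv : ∑ j, v j ^ 2 ≤ σ ^ 2) (hL : 1 ≤ L) :
    𝔼 ε : ι → ℤˣ, |(round (v ⬝ᵥ signVec ε / (4 * σ * √L)) : ℝ)| ≤ 2 * exp (-(2 * L)) := by
  have hsqrt : √L ^ 2 = L := sq_sqrt (by linarith)
  have : 0 < √L := sqrt_pos.2 (by linarith)
  set t : ℝ := 2 * √L / σ with ht
  have hscale (y : ℝ) : 8 * L * (y / (4 * σ * √L)) = t * y := by
    rw [ht]
    nth_rw 1 [← hsqrt]
    field_simp
    ring
  have hvar : (∑ j, (t • v) j ^ 2) / 2 ≤ 2 * L := by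
    have hσt : t ^ 2 * σ ^ 2 = 4 * L := by
      rw [ht, div_pow, mul_pow, hsqrt]
      field_simp
      norm_num
    simp only [Pi.smul_apply, smul_eq_mul, mul_pow, ← mul_sum]
    nlinarith [mul_le_mul_of_nonneg_left hv (sq_nonneg t)]
  -- The exponent `a = 8 * L` minimizes the resulting bound `2 * exp (-a / 2 + a ^ 2 / (32 * L))`.
  calc 𝔼 ε : ι → ℤˣ, |(round (v ⬝ᵥ signVec ε / (4 * σ * √L)) : ℝ)|
      ≤ 𝔼 ε : ι → ℤˣ, 2 * exp (-(4 * L)) * cosh (t • v ⬝ᵥ signVec ε) := by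
        refine expect_le_expect fun ε _ => ?_
        refine (abs_round_le_exp_mul_cosh _ (show 1 ≤ 8 * L by linarith)).trans_eq ?_
        rw [hscale, smul_dotProduct, smul_eq_mul]
        ring_nf
    _ = 2 * exp (-(4 * L)) * 𝔼 ε : ι → ℤˣ, cosh (t • v ⬝ᵥ signVec ε) := (mul_expect _ _ _).symm
    _ ≤ 2 * exp (-(4 * L)) * exp (2 * L) := by
        gcongr
        exact (expect_cosh_dotProduct_signVec_le _).trans (exp_le_exp.2 hvar)
    _ = 2 * exp (-(2 * L)) := by
        rw [mul_assoc, ← exp_add]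
        ring_nf

/-- The cell, in a grid of side `Δ`, that contains the image under `V` of the sign vector of `ε`.
A cell is encoded by its centre divided by `Δ`, so that most sign vectors should land in cells with
few nonzero coordinates. -/
noncomputable def roundedImage {ρ ι : Type*} [Fintype ι] (V : Matrix ρ ι ℝ) (Δ : ℝ)
    (ε : ι → ℤˣ) : ρ → ℤ := fun i => round ((V *ᵥ signVec ε) i / Δ)

theorem norm_mulVec_sub_le_of_roundedImage_eq {ρ ι : Type*} [Fintype ρ] [Fintype ι]
    {V : Matrix ρ ι ℝ} {Δ : ℝ} (hΔ : 0 < Δ) {ε ε' : ι → ℤˣ}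
    (h : roundedImage V Δ ε = roundedImage V Δ ε') :
    ‖V *ᵥ (signVec ε - signVec ε')‖ ≤ Δ := by
  refine (pi_norm_le_iff_of_nonneg hΔ.le).2 fun i => ?_
  have hround := abs_sub_le_one_of_round_eq (congrFun h i)
  rw [← sub_div, abs_div, abs_of_pos hΔ, div_le_one hΔ] at hround
  rwa [Matrix.mulVec_sub]

theorem exists_card_filter_roundedImage_ge {ρ ι : Type*} [Fintype ρ] [Fintype ι]
    {V : Matrix ρ ι ℝ} {σ L : ℝ} (hσ : 0 < σ) (hV : ∀ i, ∑ j, V i j ^ 2 ≤ σ ^ 2) (hL : 1 ≤ L) :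
    ∃ ε₀, 2 ^ Fintype.card ι * exp (-(6 * (Fintype.card ρ * exp (-L)))) ≤
      #{ε | roundedImage V (4 * σ * √L) ε = roundedImage V (4 * σ * √L) ε₀} := by
  set b := roundedImage V (4 * σ * √L)
  have hL_exp : L * (2 * exp (-(2 * L))) ≤ 2 * exp (-L) := by
    have hsplit : exp (-(2 * L)) = exp (-L) * exp (-L) := by rw [← exp_add]; ring_nf
    have hle : L * exp (-L) ≤ 1 := by
      rw [exp_neg, ← div_eq_mul_inv]
      exact div_le_one_of_le₀ (by linarith [add_one_le_exp L]) (exp_pos L).le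
    rw [hsplit]
    nlinarith [exp_pos (-L)]
  have henergy : 𝔼 ε, ∑ i, L * |(b ε i : ℝ)| ≤ Fintype.card ρ * (2 * exp (-L)) := by
    rw [expect_sum_comm]
    calc ∑ i, 𝔼 ε, L * |(b ε i : ℝ)| ≤ ∑ _i : ρ, 2 * exp (-L) := by
          refine sum_le_sum fun i _ => ?_
          rw [← mul_expect]
          exact (mul_le_mul_of_nonneg_left (expect_abs_round_dotProduct_signVec_le hσ (hV i) hL)
            (by linarith)).trans hL_exp
      _ = Fintype.card ρ * (2 * exp (-L)) := by rw [sum_const, card_univ, nsmul_eq_mul]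
  obtain ⟨ε₀, hε₀⟩ := exists_card_mul_exp_neg_expect_le b fun p => ∑ i, L * |(p i : ℝ)|
  rw [Fintype.card_fun, Fintype.card_units_int, Nat.cast_pow, Nat.cast_ofNat] at hε₀
  refine ⟨ε₀, ?_⟩
  set X := Fintype.card ρ * exp (-L)
  calc 2 ^ Fintype.card ι * exp (-(6 * X))
      = 2 ^ Fintype.card ι * exp (-(2 * X)) * exp (-(4 * X)) := by
        rw [mul_assoc, ← exp_add]
        ring_nf
    _ ≤ 2 ^ Fintype.card ι * exp (-𝔼 ε, ∑ i, L * |(b ε i : ℝ)|) * exp (-(4 * X)) := by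
        gcongr
        linarith
    _ ≤ #{ε | b ε = b ε₀} * exp (4 * X) * exp (-(4 * X)) := by
        refine mul_le_mul_of_nonneg_right ?_ (exp_pos _).le
        refine hε₀.trans (mul_le_mul_of_nonneg_left ?_ (Nat.cast_nonneg _))
        exact (sum_exp_neg_sum_abs_le hL _).trans_eq (by rw [mul_left_comm])
    _ = #{ε | b ε = b ε₀} := by rw [mul_assoc, ← exp_add, add_neg_cancel, exp_zero, mul_one]

theorem exists_mem_card_le_mul_hammingDist {ι : Type*} [Fintype ι] {F : Finset (ι → ℤˣ)}
    (hF : 2 ^ Fintype.card ι * exp (-(3 / 40 * Fintype.card ι)) ≤ #F) :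
    ∃ ε ∈ F, ∃ ε' ∈ F, Fintype.card ι ≤ 10 * hammingDist ε ε' := by
  by_contra! hclose
  set N := Fintype.card ι with hN
  obtain ⟨ε, hε⟩ : F.Nonempty := by
    rw [← card_pos, ← Nat.cast_pos (α := ℝ)]
    exact lt_of_lt_of_le (by positivity) hF
  have hN_pos : N ≠ 0 := by
    have := hclose ε hε ε hε
    lia
  have hball := card_mul_pow_le_of_hammingDist_le (x := ε) (d := N / 10) (F := F)
    (fun ε' hε' => by have := hclose ε hε ε' hε'; lia) (exp_pos (-2)).le
    (exp_le_one_iff.2 (by norm_num))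
  rw [Fintype.card_units_int, ← hN, Nat.cast_ofNat, show (2 - 1 : ℝ) = 1 by norm_num, one_mul]
    at hball
  have hradius : exp (-(1 / 5 * N)) ≤ exp (-2) ^ (N / 10) := by
    rw [← exp_nat_mul, exp_le_exp]
    linarith [Nat.cast_div_le (α := ℝ) (m := N) (n := 10)]
  have hpow : (2 * exp (-(11 / 40))) ^ N ≤ (1 + exp (-2)) ^ N :=
    calc (2 * exp (-(11 / 40))) ^ N = 2 ^ N * exp (-(3 / 40 * N)) * exp (-(1 / 5 * N)) := by
          rw [mul_pow, ← exp_nat_mul, mul_assoc, ← exp_add]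
          ring_nf
      _ ≤ #F * exp (-2) ^ (N / 10) := by gcongr
      _ ≤ (1 + exp (-2)) ^ N := hball
  have hlt : 1 + exp (-2) < 2 * exp (-(11 / 40)) := by
    have : exp (-2) ≤ 1 / 3 := by
      rw [exp_neg, ← one_div]
      exact one_div_le_one_div_of_le (by norm_num) (by linarith [add_one_le_exp (2 : ℝ)])
    linarith [add_one_le_exp (-(11 / 40) : ℝ)]
  exact hpow.not_gt (pow_lt_pow_left₀ hlt (by positivity) hN_pos)

theorem half_sub_signVec_apply_mem {ι : Type*} (ε ε' : ι → ℤˣ) (j : ι) :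
    ((2⁻¹ : ℝ) • (signVec ε - signVec ε')) j ∈ ({-1, 0, 1} : Set ℝ) := by
  rcases Int.units_eq_one_or (ε j) with h | h <;> rcases Int.units_eq_one_or (ε' j) with h' | h' <;>
    norm_num [signVec, h, h']

theorem hammingNorm_half_sub_signVec {ι : Type*} [Fintype ι] (ε ε' : ι → ℤˣ) :
    hammingNorm ((2⁻¹ : ℝ) • (signVec ε - signVec ε')) = hammingDist ε ε' := by
  rw [hammingNorm_smul fun _ => IsSMulRegular.of_ne_zero (by norm_num), sub_eq_neg_add,
    ← hammingDist_eq_hammingNorm, hammingDist_comm]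
  exact hammingDist_comp (fun _ (e : ℤˣ) => ((e : ℤ) : ℝ)) fun _ =>
    Int.cast_injective.comp Units.val_injective

theorem exists_partial_coloring {ρ ι : Type*} [Fintype ρ] [Fintype ι] {V : Matrix ρ ι ℝ}
    {σ L : ℝ} (hσ : 0 < σ) (hV : ∀ i, ∑ j, V i j ^ 2 ≤ σ ^ 2) (hL : 1 ≤ L)
    (hcard : Fintype.card ρ * exp (-L) ≤ Fintype.card ι / 80) :
    ∃ x : ι → ℝ, (∀ j, x j ∈ ({-1, 0, 1} : Set ℝ)) ∧ Fintype.card ι ≤ 10 * hammingNorm x ∧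
      ‖V *ᵥ x‖ ≤ 2 * σ * √L := by
  obtain ⟨ε₀, hε₀⟩ := exists_card_filter_roundedImage_ge hσ hV hL
  obtain ⟨ε, hε, ε', hε', hfar⟩ := exists_mem_card_le_mul_hammingDist
    (le_trans (by gcongr ?_ * exp ?_; linarith) hε₀)
  refine ⟨(2⁻¹ : ℝ) • (signVec ε - signVec ε'), half_sub_signVec_apply_mem ε ε', ?_, ?_⟩
  · rwa [hammingNorm_half_sub_signVec]
  · have hsame := norm_mulVec_sub_le_of_roundedImage_eq (by positivity)
      ((mem_filter.1 hε).2.trans (mem_filter.1 hε').2.symm)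
    rw [Matrix.mulVec_smul, norm_smul, norm_inv, norm_two]
    linarith

theorem exists_partial_coloring_neg_one {ρ ι : Type*} [Fintype ρ] [Fintype ι]
    {V : Matrix ρ ι ℝ} {σ L : ℝ} (hσ : 0 < σ) (hV : ∀ i, ∑ j, V i j ^ 2 ≤ σ ^ 2) (hL : 1 ≤ L)
    (hcard : Fintype.card ρ * exp (-L) ≤ Fintype.card ι / 80) :
    ∃ x : ι → ℝ, (∀ j, -1 ≤ x j) ∧ Fintype.card ι ≤ 20 * #{j | x j = -1} ∧
      ‖V *ᵥ x‖ ≤ 2 * σ * √L := by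
  obtain ⟨x, hx, hsupport, hVx⟩ := exists_partial_coloring hσ hV hL hcard
  simp only [Set.mem_insert_iff, Set.mem_singleton_iff] at hx
  have hsplit : hammingNorm x ≤ #{j | x j = -1} + #{j | (-x) j = -1} := by
    refine (card_le_card fun j hj => ?_).trans (card_union_le _ _)
    rcases hx j with h | h | h <;> simp_all
  rcases le_total #{j | (-x) j = -1} #{j | x j = -1} with hmaj | hmaj
  · refine ⟨x, fun j => ?_, by lia, hVx⟩
    rcases hx j with h | h | h <;> norm_num [h]
  · refine ⟨-x, fun j => ?_, by lia, by rwa [Matrix.mulVec_neg, norm_neg]⟩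
    rcases hx j with h | h | h <;> norm_num [h]

theorem exists_partial_coloring_on {ρ κ : Type*} [Fintype ρ] [Fintype κ] {V : Matrix ρ κ ℝ}
    {J : Finset κ} {σ L : ℝ} (hσ : 0 < σ) (hV : ∀ i, ∑ j ∈ J, V i j ^ 2 ≤ σ ^ 2) (hL : 1 ≤ L)
    (hcard : Fintype.card ρ * exp (-L) ≤ #J / 80) :
    ∃ x : κ → ℝ, (∀ j, -1 ≤ x j) ∧ #J ≤ 20 * #{j ∈ J | x j = -1} ∧ ‖V *ᵥ x‖ ≤ 2 * σ * √L := by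
  obtain ⟨x, hx, hneg, hVx⟩ := exists_partial_coloring_neg_one (ι := J)
    (V := V.submatrix id Subtype.val) hσ
    (fun i => (sum_coe_sort J fun j => V i j ^ 2).trans_le (hV i)) hL (by rwa [Fintype.card_coe])
  set y : κ → ℝ := Function.extend Subtype.val x (0 : κ → ℝ)
  have hy_mem (j : J) : y j = x j := Subtype.val_injective.extend_apply x 0 j
  have hy_notMem (j : κ) (hj : j ∉ J) : y j = 0 := by
    refine Function.extend_apply' x _ j ?_
    rintro ⟨k, rfl⟩
    exact hj k.2
  refine ⟨y, fun j => ?_, ?_, ?_⟩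
  · by_cases hj : j ∈ J
    · exact (hx ⟨j, hj⟩).trans_eq (hy_mem ⟨j, hj⟩).symm
    · norm_num [hy_notMem j hj]
  · rw [Fintype.card_coe] at hneg
    refine hneg.trans (Nat.mul_le_mul_left 20 ?_)
    refine card_le_card_of_injOn Subtype.val (fun j hj => ?_) Subtype.val_injective.injOn
    have hxj := (mem_filter.1 hj).2
    exact mem_filter.2 ⟨j.2, (hy_mem j).trans hxj⟩
  · convert hVx using 2
    ext i
    calc ∑ j, V i j * y j = ∑ j ∈ J, V i j * y j :=
          (sum_subset (subset_univ J) fun j _ hj => by rw [hy_notMem j hj, mul_zero]).symm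
      _ = ∑ j : J, V i j * y j := (sum_coe_sort J _).symm
      _ = ∑ j : J, V i j * x j := by simp only [hy_mem]

theorem hammingNorm_le_two_mul_card_light {κ : Type*} [Fintype κ] {w : κ → ℝ}
    (hw : w ∈ stdSimplex ℝ κ) :
    hammingNorm w ≤ 2 * #{j | w j ≠ 0 ∧ w j * hammingNorm w ≤ 2} := by
  set s := hammingNorm w
  have hsplit : s = #{j | w j ≠ 0 ∧ w j * s ≤ 2} + #{j | w j ≠ 0 ∧ ¬w j * s ≤ 2} := by
    rw [← filter_filter, ← filter_filter, card_filter_add_card_filter_not]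
    rfl
  have hheavy : 2 * #{j | w j ≠ 0 ∧ ¬w j * s ≤ 2} ≤ s := by
    rw [← Nat.cast_le (α := ℝ), Nat.cast_mul, Nat.cast_two, mul_comm, ← nsmul_eq_mul]
    calc #{j | w j ≠ 0 ∧ ¬w j * s ≤ 2} • (2 : ℝ)
        ≤ ∑ j ∈ {j | w j ≠ 0 ∧ ¬w j * s ≤ 2}, w j * s :=
          card_nsmul_le_sum _ _ _ fun j hj => (not_le.1 (mem_filter.1 hj).2.2).le
      _ ≤ ∑ j, w j * s := sum_le_univ_sum_of_nonneg fun j => mul_nonneg (hw.1 j) s.cast_nonneg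
      _ = s := by rw [← sum_mul, hw.2, one_mul]
  lia

theorem sum_mul_sq_le_of_mem_stdSimplex {κ : Type*} [Fintype κ] {u w : κ → ℝ}
    (hu : ∀ j, |u j| ≤ 1) (hw : w ∈ stdSimplex ℝ κ) {J : Finset κ} {c : ℝ} (hc : 0 ≤ c)
    (hJ : ∀ j ∈ J, w j ≤ c) : ∑ j ∈ J, (u j * w j) ^ 2 ≤ c :=
  calc ∑ j ∈ J, (u j * w j) ^ 2 ≤ ∑ j ∈ J, c * w j := by
        refine sum_le_sum fun j hj => ?_
        rw [mul_pow, sq (w j)]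
        have hu_sq : u j ^ 2 ≤ 1 := (sq_le_one_iff_abs_le_one _).2 (hu j)
        exact (mul_le_of_le_one_left (mul_self_nonneg _) hu_sq).trans
          (mul_le_mul_of_nonneg_right (hJ j hj) (hw.1 j))
    _ ≤ ∑ j, c * w j := sum_le_univ_sum_of_nonneg fun j => mul_nonneg hc (hw.1 j)
    _ = c := by rw [← mul_sum, hw.2, mul_one]

theorem hammingNorm_mul_one_add_add_card_eq_neg_one {κ R : Type*} [Fintype κ] [Ring R]
    [NoZeroDivisors R] [DecidableEq R] (w x : κ → R) :
    hammingNorm (w * (1 + x)) + #{j | w j ≠ 0 ∧ x j = -1} = hammingNorm w := by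
  have hsupport : hammingNorm (w * (1 + x)) = #{j | w j ≠ 0 ∧ ¬x j = -1} := by
    simp [hammingNorm, eq_neg_iff_add_eq_zero, add_comm]
  rw [hsupport, add_comm, ← filter_filter, ← filter_filter, card_filter_add_card_filter_not]
  rfl

theorem exists_sparser_nonneg {ρ κ : Type*} [Fintype ρ] [Fintype κ] {U : Matrix ρ κ ℝ}
    (hU : ∀ i j, |U i j| ≤ 1) {w : κ → ℝ} (hw : w ∈ stdSimplex ℝ κ) {L : ℝ} (hL : 1 ≤ L)
    (hcard : Fintype.card ρ * exp (-L) ≤ hammingNorm w / 160) :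
    ∃ v : κ → ℝ, 0 ≤ v ∧ 40 * hammingNorm v ≤ 39 * hammingNorm w ∧
      ‖U *ᵥ w - U *ᵥ v‖ ≤ 4 * √(L / hammingNorm w) := by
  have hlight := hammingNorm_le_two_mul_card_light hw
  have hs : (0 : ℝ) < hammingNorm w := by
    rw [Nat.cast_pos, hammingNorm_pos_iff]
    rintro rfl
    simpa using hw.2
  set s := hammingNorm w
  set J : Finset κ := {j | w j ≠ 0 ∧ w j * s ≤ 2}
  have hV (i : ρ) : ∑ j ∈ J, (U * Matrix.diagonal w) i j ^ 2 ≤ (2 / √s) ^ 2 := by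
    simp only [Matrix.mul_diagonal]
    calc ∑ j ∈ J, (U i j * w j) ^ 2 ≤ 2 / s :=
          sum_mul_sq_le_of_mem_stdSimplex (hU i) hw (by positivity) fun j hj =>
            (le_div_iff₀ hs).2 (mem_filter.1 hj).2.2
      _ ≤ (2 / √s) ^ 2 := by
          rw [div_pow, sq_sqrt hs.le]
          gcongr
          norm_num
  obtain ⟨x, hx, hneg, hVx⟩ := exists_partial_coloring_on (J := J) (by positivity) hV hL (by
    have : (s : ℝ) ≤ 2 * #J := by exact_mod_cast hlight
    linarith)
  refine ⟨w * (1 + x), fun j => ?_, ?_, ?_⟩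
  · exact mul_nonneg (hw.1 j) (neg_le_iff_add_nonneg'.1 (hx j))
  · have hcount := hammingNorm_mul_one_add_add_card_eq_neg_one w x
    have hsub : #{j ∈ J | x j = -1} ≤ #{j | w j ≠ 0 ∧ x j = -1} := by
      refine card_le_card fun j hj => ?_
      have hj := mem_filter.1 hj
      exact mem_filter.2 ⟨mem_univ j, (mem_filter.1 hj.1).2.1, hj.2⟩
    lia
  · have hdiff : U *ᵥ w - U *ᵥ (w * (1 + x)) = -((U * Matrix.diagonal w) *ᵥ x) := by
      rw [mul_add, mul_one, Matrix.mulVec_add, sub_add_cancel_left, ← Matrix.mulVec_mulVec]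
      congr 2
      exact funext fun j => (Matrix.mulVec_diagonal w x j).symm
    rw [hdiff, norm_neg]
    refine hVx.trans_eq ?_
    rw [sqrt_div' _ hs.le]
    ring

theorem exists_mem_stdSimplex_near {κ : Type*} [Fintype κ] [Nonempty κ] {v : κ → ℝ}
    (hv : 0 ≤ v) :
    ∃ w ∈ stdSimplex ℝ κ, hammingNorm w ≤ max 1 (hammingNorm v) ∧
      ∀ u : κ → ℝ, (∀ j, |u j| ≤ 1) → |u ⬝ᵥ v - u ⬝ᵥ w| ≤ |1 - ∑ j, v j| := by
  rcases (sum_nonneg fun j _ => hv j : 0 ≤ ∑ j, v j).eq_or_lt with hsum | hsum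
  · obtain ⟨j₀⟩ := ‹Nonempty κ›
    have hv_zero : v = 0 := funext fun j => (sum_eq_zero_iff_of_nonneg fun j _ => hv j).1
      hsum.symm j (mem_univ j)
    refine ⟨Pi.single j₀ 1, single_mem_stdSimplex ℝ j₀, le_max_of_le_left ?_, fun u hu => ?_⟩
    · simp [hammingNorm, Pi.single_apply, card_le_one]
    · simpa [hv_zero] using hu j₀
  · set S := ∑ j, v j
    refine ⟨S⁻¹ • v, ⟨fun j => ?_, ?_⟩, le_max_of_le_right ?_, fun u hu => ?_⟩
    · exact mul_nonneg (inv_nonneg.2 hsum.le) (hv j)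
    · simp only [Pi.smul_apply, smul_eq_mul, ← mul_sum]
      exact inv_mul_cancel₀ hsum.ne'
    · exact hammingNorm_smul_le_hammingNorm
    · have huv : |u ⬝ᵥ v| ≤ S := (abs_sum_le_sum_abs _ _).trans <| sum_le_sum fun j _ => by
        rw [abs_mul, abs_of_nonneg (hv j)]
        exact mul_le_of_le_one_left (hv j) (hu j)
      calc |u ⬝ᵥ v - u ⬝ᵥ (S⁻¹ • v)| = |1 - S⁻¹| * |u ⬝ᵥ v| := by
            rw [dotProduct_smul, smul_eq_mul, ← abs_mul, sub_mul, one_mul]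
        _ ≤ |1 - S⁻¹| * |S| := by
            rw [abs_of_pos hsum]
            gcongr
        _ = |1 - S| := by
            rw [← abs_mul, sub_mul, one_mul, inv_mul_cancel₀ hsum.ne', abs_sub_comm]

theorem exists_sparser_mem_stdSimplex {ρ κ : Type*} [Fintype ρ] [Fintype κ] {U : Matrix ρ κ ℝ}
    (hU : ∀ i j, |U i j| ≤ 1) {w : κ → ℝ} (hw : w ∈ stdSimplex ℝ κ) (hs : 1 < hammingNorm w)
    {L : ℝ} (hL : 1 ≤ L) (hcard : (Fintype.card ρ + 1) * exp (-L) ≤ hammingNorm w / 160) :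
    ∃ w' ∈ stdSimplex ℝ κ, 40 * hammingNorm w' ≤ 39 * hammingNorm w ∧
      ‖U *ᵥ w - U *ᵥ w'‖ ≤ 8 * √(L / hammingNorm w) := by
  have : Nonempty κ := (nonempty_of_sum_ne_zero (hw.2.trans_ne one_ne_zero)).to_type
  set R := Matrix.fromRows (Matrix.replicateRow Unit (1 : κ → ℝ)) U
  have hR (i : Unit ⊕ ρ) (j : κ) : |R i j| ≤ 1 := by
    rcases i with _ | i
    · simp [R]
    · exact hU i j
  obtain ⟨v, hv, hv_size, hRv⟩ := exists_sparser_nonneg hR hw hL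
    (by simpa [add_comm] using hcard)
  set δ := 4 * √(L / hammingNorm w)
  have hrow (i : Unit ⊕ ρ) : |R i ⬝ᵥ w - R i ⬝ᵥ v| ≤ δ := (norm_le_pi_norm _ i).trans hRv
  have hsum : |1 - ∑ j, v j| ≤ δ := by simpa [R, dotProduct, hw.2] using hrow (Sum.inl ())
  obtain ⟨w', hw', hw'_size, hnear⟩ := exists_mem_stdSimplex_near hv
  refine ⟨w', hw', by lia, (pi_norm_le_iff_of_nonneg (by positivity)).2 fun i => ?_⟩
  calc |U i ⬝ᵥ w - U i ⬝ᵥ w'| ≤ |U i ⬝ᵥ w - U i ⬝ᵥ v| + |U i ⬝ᵥ v - U i ⬝ᵥ w'| :=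
        abs_sub_le _ _ _
    _ ≤ δ + δ := add_le_add (hrow (Sum.inr i)) ((hnear _ (hU i)).trans hsum)
    _ = 8 * √(L / hammingNorm w) := by ring

theorem exists_size_le_dist_le_of_lt_size {α E : Type*} [PseudoMetricSpace E]
    {f : α → E} {size : α → ℕ} {T : ℕ} (hT : 0 < T) {q D : ℝ} (hq : q < 1) (hD : 0 ≤ D)
    (hstep : ∀ a, T < size a →
      ∃ b, √(size b) ≤ q * √(size a) ∧ dist (f a) (f b) ≤ D / √(size a))
    (a : α) (ha : T < size a) :
    ∃ b, size b ≤ T ∧ dist (f a) (f b) ≤ D / (1 - q) * (1 / √T - q / √(size a)) := by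
  have hq_sub : 0 < 1 - q := sub_pos.2 hq
  have : 0 < √(T : ℝ) := sqrt_pos.2 (Nat.cast_pos.2 hT)
  have hpos {a : α} (ha : T < size a) : 0 < √(size a : ℝ) :=
    sqrt_pos.2 (Nat.cast_pos.2 (hT.trans ha))
  induction hn : size a using Nat.strong_induction_on generalizing a with
  | _ n ih =>
    subst hn
    obtain ⟨b, hsize, hdist⟩ := hstep a ha
    have hcost : D / √(size a) = D / (1 - q) * (1 / √(size a) - q / √(size a)) := by
      field_simp
    rcases le_or_gt (size b) T with hb | hb
    · refine ⟨b, hb, hdist.trans (hcost.trans_le ?_)⟩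
      gcongr
    · have hlt : size b < size a := by
        rw [← Nat.cast_lt (α := ℝ), ← sqrt_lt_sqrt_iff (Nat.cast_nonneg _)]
        exact hsize.trans_lt (mul_lt_of_lt_one_left (hpos ha) hq)
      obtain ⟨c, hc, hbc⟩ := ih _ hlt b hb rfl
      have hratio : 1 / √(size a) ≤ q / √(size b) := by
        rw [div_le_div_iff₀ (hpos ha) (hpos hb), one_mul]
        exact hsize
      refine ⟨c, hc, ?_⟩
      calc dist (f a) (f c) ≤ dist (f a) (f b) + dist (f b) (f c) := dist_triangle _ _ _
        _ ≤ D / (1 - q) * (1 / √(size a) - q / √(size a)) +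
            D / (1 - q) * (1 / √T - q / √(size b)) := add_le_add (hdist.trans_eq hcost) hbc
        _ ≤ D / (1 - q) * (1 / √(size a) - q / √(size a)) +
            D / (1 - q) * (1 / √T - 1 / √(size a)) := by gcongr
        _ = D / (1 - q) * (1 / √T - q / √(size a)) := by ring

theorem exists_size_le_dist_le {α E : Type*} [PseudoMetricSpace E] {f : α → E} {size : α → ℕ}
    {T : ℕ} (hT : 0 < T) {q D : ℝ} (hq₀ : 0 ≤ q) (hq₁ : q < 1) (hD : 0 ≤ D)
    (hstep : ∀ a, T < size a →
      ∃ b, √(size b) ≤ q * √(size a) ∧ dist (f a) (f b) ≤ D / √(size a)) (a : α) :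
    ∃ b, size b ≤ T ∧ dist (f a) (f b) ≤ D / ((1 - q) * √T) := by
  have : 0 < 1 - q := sub_pos.2 hq₁
  rcases le_or_gt (size a) T with ha | ha
  · exact ⟨a, ha, by rw [dist_self]; positivity⟩
  · obtain ⟨b, hb, hab⟩ := exists_size_le_dist_le_of_lt_size hT hq₁ hD hstep a ha
    refine ⟨b, hb, hab.trans ?_⟩
    calc D / (1 - q) * (1 / √T - q / √(size a)) ≤ D / (1 - q) * (1 / √T) := by
          gcongr
          exact sub_le_self _ (by positivity)
      _ = D / ((1 - q) * √T) := by rw [div_mul_div_comm, mul_one]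

theorem exists_mem_stdSimplex_hammingNorm_le {ρ κ : Type*} [Fintype ρ] [Fintype κ]
    {U : Matrix ρ κ ℝ} (hU : ∀ i j, |U i j| ≤ 1) {w : κ → ℝ} (hw : w ∈ stdSimplex ℝ κ) {T : ℕ}
    (hT : 0 < T) {L : ℝ} (hL : 1 ≤ L) (hcard : (Fintype.card ρ + 1) * exp (-L) ≤ T / 160) :
    ∃ w' ∈ stdSimplex ℝ κ, hammingNorm w' ≤ T ∧ ‖U *ᵥ w - U *ᵥ w'‖ ≤ 648 * √(L / T) := by
  have hstep (a : stdSimplex ℝ κ) (ha : T < hammingNorm a.1) : ∃ b : stdSimplex ℝ κ,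
      √(hammingNorm b.1) ≤ 80 / 81 * √(hammingNorm a.1) ∧
        dist (U *ᵥ a.1) (U *ᵥ b.1) ≤ 8 * √L / √(hammingNorm a.1) := by
    obtain ⟨b, hb, hsize, hdist⟩ := exists_sparser_mem_stdSimplex hU a.2 (by lia) hL
      (hcard.trans (by gcongr))
    refine ⟨⟨b, hb⟩, ?_, ?_⟩
    · have hsize : (40 * hammingNorm b : ℝ) ≤ 39 * hammingNorm a.1 := by exact_mod_cast hsize
      rw [sqrt_le_left (by positivity), mul_pow, sq_sqrt (Nat.cast_nonneg _)]
      linarith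
    · rwa [dist_eq_norm, mul_div_assoc, ← sqrt_div' _ (Nat.cast_nonneg _)]
  obtain ⟨⟨w', hw'⟩, hsize, hdist⟩ := exists_size_le_dist_le hT
    (by norm_num) (by norm_num) (by positivity) hstep ⟨w, hw⟩
  refine ⟨w', hw', hsize, ?_⟩
  rw [← dist_eq_norm, sqrt_div' _ (Nat.cast_nonneg _)]
  exact hdist.trans_eq (by ring)

theorem one_le_nine_mul_log {z : ℝ} (hz : 2 ≤ z) : 1 ≤ 9 * log z := by
  linarith [log_two_gt_d9, log_le_log two_pos hz]

theorem add_one_mul_exp_neg_nine_mul_log_le {N T : ℝ} (hN : 0 ≤ N) (hT : 1 ≤ T) :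
    (N + 1) * exp (-(9 * log (2 + N / T))) ≤ T / 160 := by
  set z := 2 + N / T with hz
  have : 0 < T := by linarith
  have hz₂ : 2 ≤ z := le_add_of_nonneg_right (by positivity)
  have hTz : T * z = 2 * T + N := by rw [hz]; field_simp
  have hz₉ : 2 ^ 8 * z ≤ z ^ 9 := by
    rw [pow_succ z 8]
    gcongr
  have hexp : exp (-(9 * log z)) = (z ^ 9)⁻¹ := by
    rw [exp_neg, ← exp_log (show 0 < z by linarith), ← exp_nat_mul, log_exp, Nat.cast_ofNat]
  rw [hexp, ← div_eq_mul_inv, div_le_iff₀ (by positivity)]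
  nlinarith

/-- Non-negative sparsification: as the Sparsification Theorem, but if `w` has
non-negative coordinates then so does the sparsified vector `w'`. -/
theorem sparsification_nonneg :
    ∃ C : ℝ, 0 < C ∧
      ∀ (n m : ℕ), 0 < n → 0 < m →
        ∀ U : Matrix (Fin n) (Fin m) ℝ, (∀ i j, U i j ∈ Set.Icc (-1 : ℝ) 1) →
          ∀ w : Fin m → ℝ, (∑ j, |w j|) = 1 → (∀ j, 0 ≤ w j) →
            ∀ T : ℕ, 0 < T → T ≤ m →
              ∃ w' : Fin m → ℝ,
                (∀ j, 0 ≤ w' j) ∧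
                (∑ j, |w' j|) = 1 ∧
                (Finset.univ.filter (fun j => w' j ≠ 0)).card ≤ T ∧
                ∀ i, |U.mulVec w i - U.mulVec w' i| ≤
                  C * Real.sqrt (Real.log (2 + (n : ℝ) / (T : ℝ)) / (T : ℝ)) := by
  refine ⟨648 * 3, by norm_num, fun n m _ _ U hU w hw_sum hw T hT _ => ?_⟩
  simp only [abs_of_nonneg (hw _)] at hw_sum
  obtain ⟨w', hw', hsize, hdist⟩ := exists_mem_stdSimplex_hammingNorm_le
    (fun i j => abs_le.2 (hU i j)) ⟨hw, hw_sum⟩ hT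
    (one_le_nine_mul_log (le_add_of_nonneg_right (by positivity : 0 ≤ (n : ℝ) / T)))
    (by simpa using add_one_mul_exp_neg_nine_mul_log_le n.cast_nonneg (Nat.one_le_cast.2 hT))
  refine ⟨w', hw'.1, ?_, hsize, fun i => ((norm_le_pi_norm _ i).trans hdist).trans_eq ?_⟩
  · simp only [abs_of_nonneg (hw'.1 _), hw'.2]
  · rw [mul_div_assoc, sqrt_mul (by norm_num), show (9 : ℝ) = 3 ^ 2 by norm_num,
      sqrt_sq (by norm_num), mul_assoc]
end

section
/- There exists a universal constant C > 0 such that for all positive integers n, m, every matrix U ∈ [−1,1]^{n×m}, every vector w ∈ ℝ^m with ‖w‖₁ = 1, and every positive integer T ≤ m, there exists a vector w' ∈ ℝ^m with ‖w'‖₁ = 1, ‖w'‖₀ ≤ T, and min_{1≤i≤n} (Uw')_i ≥ min_{1≤i≤n} (Uw)_i − C·√(log(2 + n/T)/T). -/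
open Finset
open scoped Classical

/-!
By Spencer's partial colouring theorem, for `n` row vectors with entries in `[-1, 1]` there is a
point of the cube `[-1, 1]ᵏ` with a constant fraction of its coordinates equal to `-1` whose inner
products with all rows are `O(√(k log (2 + n / k)))`. If `w` has support of size `k`, at least half
of its nonzero entries are at most `2 / k` in size; colouring those by `y` and replacing `w` by
`w * (1 + y)` kills a constant fraction of the support and moves `U w` by
`O(√(log (2 + n / k) / k))`. Treating the row `|w|` in the same way keeps the `ℓ¹` norm within the
same error of `1`. Iterating down to support size `T`, the losses grow geometrically, so the last
one dominates.

The colouring is a minimizer `x` of `∑ i, cosh (l ⟪v i, x⟫) * exp (-2 l² ‖x‖²)` on the polytope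
`|x j| ≤ 1`, `|⟪v i, x⟫| ≤ D`. If the number of tight constraints were less than half the
dimension, one could move both ways along a direction orthogonal to all of them, contradicting
second-order optimality; and the value of the potential leaves room for only a few tight
constraints `|⟪v i, x⟫| = D`.
-/

open Module Filter
open scoped Matrix RealInnerProductSpace Topology

section Polyhedron

variable {E κ : Type*} [NormedAddCommGroup E] [InnerProductSpace ℝ E]

/-- The origin-symmetric polyhedron cut out by the slabs `|⟪u a, x⟫| ≤ r a`. It will carry the
constraints of a partial colouring. -/
def symmetricPolyhedron (u : κ → E) (r : κ → ℝ) : Set E :=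
  {x | ∀ a, |⟪u a, x⟫| ≤ r a}

lemma isClosed_symmetricPolyhedron (u : κ → E) (r : κ → ℝ) :
    IsClosed (symmetricPolyhedron u r) := by
  simp only [symmetricPolyhedron, Set.ofPred_forall]
  exact isClosed_iInter fun a => isClosed_le (by fun_prop) continuous_const

lemma zero_mem_symmetricPolyhedron (u : κ → E) {r : κ → ℝ} (hr : ∀ a, 0 ≤ r a) :
    (0 : E) ∈ symmetricPolyhedron u r := fun a => by simpa using hr a

lemma eventually_add_smul_mem_symmetricPolyhedron [Finite κ] {u : κ → E} {r : κ → ℝ} {x d : E}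
    (hx : x ∈ symmetricPolyhedron u r) (hd : ∀ a, |⟪u a, x⟫| = r a → ⟪u a, d⟫ = 0) :
    ∀ᶠ s : ℝ in 𝓝 0, x + s • d ∈ symmetricPolyhedron u r := by
  refine eventually_all.2 fun a => ?_
  rcases (hx a).lt_or_eq with hslack | htight
  · have hcont : Continuous fun s : ℝ => |⟪u a, x + s • d⟫| := by fun_prop
    exact (hcont.continuousAt.eventually_lt continuousAt_const (by simpa using hslack)).mono
      fun s hs => hs.le
  · exact .of_forall fun s => by simp [inner_add_right, inner_smul_right, hd a htight, htight]

end Polyhedron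

section Potential

variable {E ι κ : Type*} [NormedAddCommGroup E] [InnerProductSpace ℝ E]

lemma exists_mem_finrank_mul_sum_inner_sq_le [Fintype ι] (K : Submodule ℝ E)
    [FiniteDimensional ℝ K] (hK : 0 < finrank ℝ K) (v : ι → E) {c : ι → ℝ} (hc : ∀ i, 0 ≤ c i) :
    ∃ d ∈ K, ‖d‖ = 1 ∧ finrank ℝ K * ∑ i, c i * ⟪v i, d⟫ ^ 2 ≤ ∑ i, c i * ‖v i‖ ^ 2 := by
  let b := stdOrthonormalBasis ℝ K
  have hb : Orthonormal ℝ fun t => (b t : E) := b.orthonormal.comp_linearIsometry K.subtypeₗᵢ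
  have bessel (i : ι) : ∑ t, ⟪v i, b t⟫ ^ 2 ≤ ‖v i‖ ^ 2 := by
    simpa [real_inner_comm] using hb.sum_inner_products_le (v i) (s := univ)
  have : Nonempty (Fin (finrank ℝ K)) := ⟨⟨0, hK⟩⟩
  obtain ⟨t, -, ht⟩ : ∃ t ∈ univ, finrank ℝ K * ∑ i, c i * ⟪v i, b t⟫ ^ 2 ≤
      ∑ i, c i * ‖v i‖ ^ 2 := by
    refine exists_le_of_sum_le univ_nonempty ?_
    rw [← mul_sum, sum_const, card_univ, Fintype.card_fin, nsmul_eq_mul, sum_comm]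
    simp only [← mul_sum]
    gcongr with i
    · exact hc i
    · exact bessel i
  exact ⟨b t, (b t).2, hb.1 t, ht⟩

lemma finrank_le_card_add_finrank_orthogonal_span [FiniteDimensional ℝ E] (u : κ → E)
    (s : Finset κ) :
    finrank ℝ E ≤ #s + finrank ℝ (Submodule.span ℝ (u '' s))ᗮ := by
  rw [← (Submodule.span ℝ (u '' s)).finrank_add_finrank_orthogonal, ← coe_image]
  gcongr
  exact (finrank_span_finset_le_card _).trans card_image_le

lemma cosh_le_one_add_sq {y : ℝ} (hy : |y| ≤ 1) : Real.cosh y ≤ 1 + y ^ 2 := by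
  have hy2 : y ^ 2 ≤ 1 := (sq_le_one_iff_abs_le_one y).2 hy
  have habs : |y ^ 2 / 2| = y ^ 2 / 2 := abs_of_nonneg (by positivity)
  have hexp := Real.abs_exp_sub_one_le (x := y ^ 2 / 2) (by linarith)
  linarith [Real.cosh_le_exp_half_sq y, le_abs_self (Real.exp (y ^ 2 / 2) - 1)]

variable [Fintype ι]

/-- The potential `∑ i, cosh (l ⟪v i, x⟫)`, a smooth proxy for `maxᵢ |⟪v i, x⟫|`. -/
noncomputable def coshPotential (v : ι → E) (l : ℝ) (x : E) : ℝ :=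
  ∑ i, Real.cosh (l * ⟪v i, x⟫)

/-- The potential `coshPotential` damped by a Gaussian factor that rewards points far from the
origin. The constant `2` is what makes second-order optimality fail on every subspace of more than
half the dimension. -/
noncomputable def dampedCoshPotential (v : ι → E) (l : ℝ) (x : E) : ℝ :=
  coshPotential v l x * Real.exp (-(2 * l ^ 2 * ‖x‖ ^ 2))

lemma coshPotential_pos [Nonempty ι] (v : ι → E) (l : ℝ) (x : E) : 0 < coshPotential v l x :=
  sum_pos (fun _ _ => Real.cosh_pos _) univ_nonempty

lemma coshPotential_nonneg (v : ι → E) (l : ℝ) (x : E) : 0 ≤ coshPotential v l x :=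
  sum_nonneg fun _ _ => (Real.cosh_pos _).le

lemma coshPotential_eq_dampedCoshPotential_mul_exp (v : ι → E) (l : ℝ) (x : E) :
    coshPotential v l x = dampedCoshPotential v l x * Real.exp (2 * l ^ 2 * ‖x‖ ^ 2) := by
  rw [dampedCoshPotential, mul_assoc, ← Real.exp_add, neg_add_cancel, Real.exp_zero, mul_one]

lemma dampedCoshPotential_zero (v : ι → E) (l : ℝ) :
    dampedCoshPotential v l 0 = Fintype.card ι := by
  simp [dampedCoshPotential, coshPotential]

lemma continuous_dampedCoshPotential (v : ι → E) (l : ℝ) :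
    Continuous (dampedCoshPotential v l) := by
  have := Real.continuous_cosh
  unfold dampedCoshPotential coshPotential
  fun_prop

lemma card_abs_inner_eq_mul_cosh_le_coshPotential (v : ι → E) (l : ℝ) (x : E) (D : ℝ) :
    #{i | |⟪v i, x⟫| = D} * Real.cosh (l * D) ≤ coshPotential v l x := by
  rw [← nsmul_eq_mul]
  refine (card_nsmul_le_sum _ (fun i => Real.cosh (l * ⟪v i, x⟫)) _ fun i hi => ?_).trans
    (sum_le_univ_sum_of_nonneg fun i => (Real.cosh_pos _).le)
  have hi : |⟪v i, x⟫| = D := by simpa using hi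
  rcases eq_or_eq_neg_of_abs_eq hi with h | h <;> simp [h]

lemma coshPotential_add_add_coshPotential_sub_le {v : ι → E} {l : ℝ} {x d : E}
    (hd : ∀ i, |l * ⟪v i, d⟫| ≤ 1) :
    coshPotential v l (x + d) + coshPotential v l (x - d) ≤
      2 * (coshPotential v l x + l ^ 2 * ∑ i, Real.cosh (l * ⟪v i, x⟫) * ⟪v i, d⟫ ^ 2) := by
  simp only [coshPotential, mul_sum, ← sum_add_distrib]
  refine sum_le_sum fun i _ => ?_
  calc Real.cosh (l * ⟪v i, x + d⟫) + Real.cosh (l * ⟪v i, x - d⟫)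
      = 2 * (Real.cosh (l * ⟪v i, x⟫) * Real.cosh (l * ⟪v i, d⟫)) := by
        rw [inner_add_right, inner_sub_right, mul_add, mul_sub, Real.cosh_add, Real.cosh_sub]
        ring
    _ ≤ 2 * (Real.cosh (l * ⟪v i, x⟫) * (1 + (l * ⟪v i, d⟫) ^ 2)) := by
        gcongr
        exact cosh_le_one_add_sq (hd i)
    _ = _ := by ring

lemma coshPotential_mul_exp_le_of_dampedCoshPotential_le {v : ι → E} {l : ℝ} {x y : E}
    (h : dampedCoshPotential v l x ≤ dampedCoshPotential v l y) :
    coshPotential v l x * Real.exp (2 * l ^ 2 * (‖y‖ ^ 2 - ‖x‖ ^ 2)) ≤ coshPotential v l y := by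
  rw [coshPotential_eq_dampedCoshPotential_mul_exp v l y]
  calc coshPotential v l x * Real.exp (2 * l ^ 2 * (‖y‖ ^ 2 - ‖x‖ ^ 2))
      = dampedCoshPotential v l x * Real.exp (2 * l ^ 2 * ‖y‖ ^ 2) := by
        rw [dampedCoshPotential, mul_assoc (coshPotential v l x), ← Real.exp_add]
        congr 2
        ring
    _ ≤ _ := by gcongr

lemma two_mul_coshPotential_mul_le_add_sub {v : ι → E} {l : ℝ} {x d : E}
    (hadd : dampedCoshPotential v l x ≤ dampedCoshPotential v l (x + d))
    (hsub : dampedCoshPotential v l x ≤ dampedCoshPotential v l (x - d)) :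
    2 * (coshPotential v l x * (1 + 2 * l ^ 2 * ‖d‖ ^ 2)) ≤
      coshPotential v l (x + d) + coshPotential v l (x - d) := by
  set a := 4 * l ^ 2 * ⟪x, d⟫
  set b := 2 * l ^ 2 * ‖d‖ ^ 2
  have hexp_add : 2 * l ^ 2 * (‖x + d‖ ^ 2 - ‖x‖ ^ 2) = b + a := by
    rw [norm_add_sq_real]; ring
  have hexp_sub : 2 * l ^ 2 * (‖x - d‖ ^ 2 - ‖x‖ ^ 2) = b + -a := by
    rw [norm_sub_sq_real]; ring
  have hplus := coshPotential_mul_exp_le_of_dampedCoshPotential_le hadd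
  have hminus := coshPotential_mul_exp_le_of_dampedCoshPotential_le hsub
  rw [hexp_add, Real.exp_add] at hplus
  rw [hexp_sub, Real.exp_add] at hminus
  calc 2 * (coshPotential v l x * (1 + b))
      ≤ 2 * (coshPotential v l x * (Real.exp b * Real.cosh a)) := by
        gcongr
        · exact coshPotential_nonneg v l x
        · linarith [Real.add_one_le_exp b,
            le_mul_of_one_le_right (Real.exp_pos b).le (Real.one_le_cosh a)]
    _ = coshPotential v l x * (Real.exp b * Real.exp a) +
          coshPotential v l x * (Real.exp b * Real.exp (-a)) := by
        rw [Real.cosh_eq]; ring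
    _ ≤ _ := add_le_add hplus hminus

lemma two_mul_coshPotential_mul_norm_sq_le {v : ι → E} {l : ℝ} (hl : l ≠ 0) {x d : E}
    (hd : ∀ i, |l * ⟪v i, d⟫| ≤ 1)
    (hadd : dampedCoshPotential v l x ≤ dampedCoshPotential v l (x + d))
    (hsub : dampedCoshPotential v l x ≤ dampedCoshPotential v l (x - d)) :
    2 * coshPotential v l x * ‖d‖ ^ 2 ≤ ∑ i, Real.cosh (l * ⟪v i, x⟫) * ⟪v i, d⟫ ^ 2 := by
  have hlower := two_mul_coshPotential_mul_le_add_sub hadd hsub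
  have hupper := coshPotential_add_add_coshPotential_sub_le (x := x) hd
  refine le_of_mul_le_mul_left ?_ (by positivity : 0 < l ^ 2)
  linarith

lemma two_mul_coshPotential_le_of_isMinOn [Finite κ] {v : ι → E} {l : ℝ} (hl : l ≠ 0)
    {u : κ → E} {r : κ → ℝ} {x d : E} (hx : x ∈ symmetricPolyhedron u r)
    (hmin : IsMinOn (dampedCoshPotential v l) (symmetricPolyhedron u r) x)
    (hd : ∀ a, |⟪u a, x⟫| = r a → ⟪u a, d⟫ = 0) :
    2 * coshPotential v l x * ‖d‖ ^ 2 ≤ ∑ i, Real.cosh (l * ⟪v i, x⟫) * ⟪v i, d⟫ ^ 2 := by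
  have hadd : ∀ᶠ s : ℝ in 𝓝 0, x + s • d ∈ symmetricPolyhedron u r :=
    eventually_add_smul_mem_symmetricPolyhedron hx hd
  have hsub : ∀ᶠ s : ℝ in 𝓝 0, x + s • -d ∈ symmetricPolyhedron u r :=
    eventually_add_smul_mem_symmetricPolyhedron hx fun a ha => by simp [hd a ha]
  have hsmall : ∀ᶠ s : ℝ in 𝓝 0, ∀ i, |l * ⟪v i, s • d⟫| ≤ 1 := by
    refine eventually_all.2 fun i => ?_
    have hcont : Continuous fun s : ℝ => |l * ⟪v i, s • d⟫| := by fun_prop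
    exact (hcont.continuousAt.eventually_lt continuousAt_const (by simp)).mono fun s hs => hs.le
  obtain ⟨s, ⟨hsadd, hssub, hssmall⟩, hs⟩ :=
    (((hadd.and (hsub.and hsmall)).filter_mono nhdsWithin_le_nhds).and
      (eventually_mem_nhdsWithin (s := {(0 : ℝ)}ᶜ))).exists
  rw [smul_neg, ← sub_eq_add_neg] at hssub
  have hsd := two_mul_coshPotential_mul_norm_sq_le hl hssmall (hmin hsadd) (hmin hssub)
  simp only [norm_smul, inner_smul_right, mul_pow, Real.norm_eq_abs, sq_abs,
    mul_left_comm _ (s ^ 2), ← mul_sum] at hsd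
  exact le_of_mul_le_mul_left hsd (sq_pos_of_ne_zero hs)

lemma exists_coshPotential_le_and_finrank_le_two_mul_card_tight [FiniteDimensional ℝ E]
    [Nonempty ι] [Fintype κ] {v : ι → E} (hv : ∀ i, ‖v i‖ ^ 2 ≤ finrank ℝ E) {l : ℝ} (hl : l ≠ 0)
    {u : κ → E} {r : κ → ℝ} (hr : ∀ a, 0 ≤ r a) {R : ℝ}
    (hR : ∀ x ∈ symmetricPolyhedron u r, ‖x‖ ^ 2 ≤ R) :
    ∃ x ∈ symmetricPolyhedron u r,
      coshPotential v l x ≤ Fintype.card ι * Real.exp (2 * l ^ 2 * R) ∧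
      finrank ℝ E ≤ 2 * #{a | |⟪u a, x⟫| = r a} := by
  have hcompact : IsCompact (symmetricPolyhedron u r) :=
    Metric.isCompact_of_isClosed_isBounded (isClosed_symmetricPolyhedron u r) <|
      isBounded_iff_forall_norm_le.2 ⟨√R, fun x hx => Real.le_sqrt_of_sq_le (hR x hx)⟩
  have hzero := zero_mem_symmetricPolyhedron u hr
  obtain ⟨x, hx, hmin⟩ :=
    hcompact.exists_isMinOn ⟨0, hzero⟩ (continuous_dampedCoshPotential v l).continuousOn
  refine ⟨x, hx, ?_, ?_⟩
  · rw [coshPotential_eq_dampedCoshPotential_mul_exp, ← dampedCoshPotential_zero v l]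
    have hmin_zero : dampedCoshPotential v l x ≤ dampedCoshPotential v l 0 := hmin hzero
    gcongr
    · exact (coshPotential_nonneg v l 0).trans_eq (by simp [dampedCoshPotential])
    · exact hR x hx
  · by_contra! hfew
    set A : Finset κ := {a | |⟪u a, x⟫| = r a} with hA
    set K := (Submodule.span ℝ (u '' A))ᗮ
    have hdim : finrank ℝ E < 2 * finrank ℝ K := by
      have : finrank ℝ E ≤ #A + finrank ℝ K := finrank_le_card_add_finrank_orthogonal_span u A
      lia
    obtain ⟨d, hdK, hd, hquad⟩ := exists_mem_finrank_mul_sum_inner_sq_le K (by lia) v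
      fun i => (Real.cosh_pos (l * ⟪v i, x⟫)).le
    have htight (a : κ) (ha : |⟪u a, x⟫| = r a) : ⟪u a, d⟫ = 0 :=
      (Submodule.mem_orthogonal _ d).1 hdK _ <|
        Submodule.subset_span ⟨a, by simpa [hA] using ha, rfl⟩
    have hopt := two_mul_coshPotential_le_of_isMinOn hl hx hmin htight
    rw [hd, one_pow, mul_one] at hopt
    have hΦ := coshPotential_pos v l x
    refine lt_irrefl (finrank ℝ K * (2 * coshPotential v l x)) ?_
    calc finrank ℝ K * (2 * coshPotential v l x)
        ≤ finrank ℝ K * ∑ i, Real.cosh (l * ⟪v i, x⟫) * ⟪v i, d⟫ ^ 2 := by gcongr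
      _ ≤ ∑ i, Real.cosh (l * ⟪v i, x⟫) * ‖v i‖ ^ 2 := hquad
      _ ≤ ∑ i, Real.cosh (l * ⟪v i, x⟫) * finrank ℝ E := by
          gcongr with i
          exact hv i
      _ = coshPotential v l x * finrank ℝ E := by rw [← sum_mul, coshPotential]
      _ < coshPotential v l x * (2 * finrank ℝ K : ℕ) := by gcongr
      _ = finrank ℝ K * (2 * coshPotential v l x) := by push_cast; ring

end Potential

section Rate

variable {n k k' : ℝ}

/-- The loss `√(log (2 + n / k) / k)` incurred when passing to supports of size `k`; for `n`
vectors in dimension `k`, partial colourings have discrepancy `O(k * sparsificationRate n k)`. -/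
noncomputable def sparsificationRate (n k : ℝ) : ℝ :=
  √(Real.log (2 + n / k) / k)

lemma log_two_add_div_pos (hn : 0 ≤ n) (hk : 0 ≤ k) : 0 < Real.log (2 + n / k) :=
  Real.log_pos (by linarith [div_nonneg hn hk])

lemma sparsificationRate_nonneg (n k : ℝ) : 0 ≤ sparsificationRate n k :=
  Real.sqrt_nonneg _

lemma sparsificationRate_pos (hn : 0 ≤ n) (hk : 0 < k) : 0 < sparsificationRate n k :=
  Real.sqrt_pos.2 (div_pos (log_two_add_div_pos hn hk.le) hk)

lemma sparsificationRate_sq (hn : 0 ≤ n) (hk : 0 ≤ k) :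
    sparsificationRate n k ^ 2 = Real.log (2 + n / k) / k :=
  Real.sq_sqrt (div_nonneg (log_two_add_div_pos hn hk).le hk)

lemma sparsificationRate_sq_mul (hn : 0 ≤ n) (hk : 0 < k) :
    sparsificationRate n k ^ 2 * k = Real.log (2 + n / k) := by
  rw [sparsificationRate_sq hn hk.le, div_mul_cancel₀ _ hk.ne']

lemma mul_sparsificationRate_le {a : ℝ} (hn : 0 ≤ n) (hk' : 0 < k') (ha : 1 ≤ a)
    (hak : a ^ 2 * k' ≤ k) :
    a * sparsificationRate n k ≤ sparsificationRate n k' := by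
  have hkk' : k' ≤ k := (le_mul_of_one_le_left hk'.le (one_le_pow₀ ha)).trans hak
  have hk : 0 < k := hk'.trans_le hkk'
  have hlog : Real.log (2 + n / k) ≤ Real.log (2 + n / k') := by gcongr
  refine Real.le_sqrt_of_sq_le ?_
  rw [mul_pow, sparsificationRate_sq hn hk.le, ← mul_div_assoc, div_le_div_iff₀ hk hk']
  calc a ^ 2 * Real.log (2 + n / k) * k' = Real.log (2 + n / k) * (a ^ 2 * k') := by ring
    _ ≤ Real.log (2 + n / k') * k :=
        mul_le_mul hlog hak (by positivity) (log_two_add_div_pos hn hk'.le).le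

lemma sparsificationRate_le (hn : 0 ≤ n) (hk' : 0 < k') (hkk' : k' ≤ k) :
    sparsificationRate n k ≤ sparsificationRate n k' := by
  simpa using mul_sparsificationRate_le hn hk' le_rfl (by simpa using hkk')

lemma sparsificationRate_add_one_le (hn : 0 ≤ n) (hk : 0 < k) (hk' : 1 ≤ k') (hkk' : k ≤ 2 * k') :
    sparsificationRate (n + 1) k' ≤ 2 * sparsificationRate n k := by
  have hlog : Real.log (2 + (n + 1) / k') ≤ 2 * Real.log (2 + n / k) := by
    have hdiv : (n + 1) / k' ≤ 2 * (n / k) + 1 := by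
      rw [add_div]
      refine add_le_add ?_ (div_le_one_of_le₀ hk' (by positivity))
      rw [← mul_div_assoc, div_le_div_iff₀ (by positivity) hk]
      nlinarith
    have hnk : 0 ≤ n / k := by positivity
    rw [← Nat.cast_ofNat (n := 2), ← Real.log_pow, Nat.cast_ofNat]
    refine Real.log_le_log (by positivity) ?_
    nlinarith
  refine Real.sqrt_le_iff.2 ⟨mul_nonneg two_pos.le (sparsificationRate_nonneg n k), ?_⟩
  rw [mul_pow, sparsificationRate_sq hn hk.le, ← mul_div_assoc, div_le_div_iff₀ (by positivity) hk]
  have := mul_le_mul hlog hkk' hk.le (by linarith [log_two_add_div_pos hn hk.le])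
  linarith

lemma four_mul_le_of_mul_cosh_le {b : ℝ} (hb : 0 ≤ b) (hn : 0 ≤ n) (hk : 0 < k)
    (h : b * Real.cosh (4 * Real.log (2 + n / k)) ≤ n * Real.exp (2 * Real.log (2 + n / k))) :
    4 * b ≤ k := by
  set ρ := n / k with hρ
  have : 0 ≤ ρ := by positivity
  have hexp (p : ℕ) : Real.exp (p * Real.log (2 + ρ)) = (2 + ρ) ^ p := by
    rw [Real.exp_nat_mul, Real.exp_log (by positivity)]
  have hcosh : (2 + ρ) ^ 4 / 2 ≤ Real.cosh (4 * Real.log (2 + ρ)) := by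
    rw [Real.cosh_eq, ← hexp 4]
    push_cast
    linarith [Real.exp_pos (-(4 * Real.log (2 + ρ)))]
  have hb4 : b * ((2 + ρ) ^ 4 / 2) ≤ ρ * k * (2 + ρ) ^ 2 := by
    rw [hρ, div_mul_cancel₀ _ hk.ne', ← hρ, ← hexp 2]
    exact (mul_le_mul_of_nonneg_left hcosh hb).trans h
  have hb2 : b * (2 + ρ) ^ 2 ≤ 2 * ρ * k := by
    refine le_of_mul_le_mul_right ?_ (by positivity : 0 < (2 + ρ) ^ 2)
    linarith
  have amgm : 8 * ρ ≤ (2 + ρ) ^ 2 := by linarith [sq_nonneg (2 - ρ)]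
  refine le_of_mul_le_mul_right ?_ (by positivity : 0 < (2 + ρ) ^ 2)
  linarith [mul_le_mul_of_nonneg_right amgm hk.le]

end Rate

section PartialColoring

variable {ι J : Type*} [Fintype ι] [Nonempty ι] [Fintype J]

lemma norm_sq_le_card_of_abs_le_one {x : EuclideanSpace ℝ J} (hx : ∀ j, |x j| ≤ 1) :
    ‖x‖ ^ 2 ≤ Fintype.card J := by
  rw [EuclideanSpace.real_norm_sq_eq]
  simpa using sum_le_card_nsmul univ _ 1 fun j _ => (sq_le_one_iff_abs_le_one (x j)).2 (hx j)

lemma exists_mem_cube_mul_cosh_le_and_card_le_two_mul_tight {V : Matrix ι J ℝ}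
    (hV : ∀ i j, |V i j| ≤ 1) {l D : ℝ} (hl : l ≠ 0) (hD : 0 ≤ D) :
    ∃ x : J → ℝ, (∀ j, |x j| ≤ 1) ∧ ‖V *ᵥ x‖ ≤ D ∧
      #{i | |(V *ᵥ x) i| = D} * Real.cosh (l * D) ≤
        Fintype.card ι * Real.exp (2 * l ^ 2 * Fintype.card J) ∧
      Fintype.card J ≤ 2 * (#{j | |x j| = 1} + #{i | |(V *ᵥ x) i| = D}) := by
  let v : ι → EuclideanSpace ℝ J := fun i => WithLp.toLp 2 (V i)
  let e : J → EuclideanSpace ℝ J := fun j => EuclideanSpace.single j 1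
  have hinner_e (x : EuclideanSpace ℝ J) (j : J) : ⟪e j, x⟫ = x j := by
    simp [e, EuclideanSpace.inner_single_left]
  have hinner_v (x : EuclideanSpace ℝ J) (i : ι) : ⟪v i, x⟫ = (V *ᵥ x.ofLp) i := by
    simp [v, PiLp.inner_apply, Matrix.mulVec, dotProduct, mul_comm]
  obtain ⟨x, hx, hΦ, hcard⟩ :=
    exists_coshPotential_le_and_finrank_le_two_mul_card_tight (v := v)
      (u := Sum.elim e v) (r := Sum.elim (fun _ => 1) fun _ => D) (R := Fintype.card J)
      (fun i => by simpa using norm_sq_le_card_of_abs_le_one (x := v i) (hV i)) hl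
      (by rintro (_ | _) <;> simp [hD])
      fun x hx => norm_sq_le_card_of_abs_le_one fun j => by simpa [hinner_e] using hx (.inl j)
  refine ⟨x, fun j => by simpa [hinner_e] using hx (.inl j), ?_, ?_, ?_⟩
  · exact (pi_norm_le_iff_of_nonneg hD).2 fun i => by simpa [hinner_v] using hx (.inr i)
  · simpa only [hinner_v] using (card_abs_inner_eq_mul_cosh_le_coshPotential v l x D).trans hΦ
  · rw [finrank_euclideanSpace, card_filter, Fintype.sum_sum_type] at hcard
    simpa only [Sum.elim_inl, Sum.elim_inr, hinner_e, hinner_v, ← card_filter] using hcard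

lemma exists_partial_coloring_s2 [Nonempty J] {V : Matrix ι J ℝ} (hV : ∀ i j, |V i j| ≤ 1) :
    ∃ x : J → ℝ, (∀ j, |x j| ≤ 1) ∧
      ‖V *ᵥ x‖ ≤
        4 * (Fintype.card J * sparsificationRate (Fintype.card ι) (Fintype.card J)) ∧
      Fintype.card J ≤ 4 * #{j | |x j| = 1} := by
  have hn : (0 : ℝ) ≤ Fintype.card ι := Nat.cast_nonneg _
  have hk : (0 : ℝ) < Fintype.card J := by exact_mod_cast Fintype.card_pos
  have hrate := sparsificationRate_pos hn hk
  have hlog := sparsificationRate_sq_mul hn hk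
  set l := sparsificationRate (Fintype.card ι) (Fintype.card J)
  -- With `L = log (2 + n / k)`, these `l` and `D` satisfy `l ^ 2 * k = L` and `l * D = 4 * L`.
  obtain ⟨x, hx, hVx, hcosh, hcard⟩ := exists_mem_cube_mul_cosh_le_and_card_le_two_mul_tight hV
    hrate.ne' (by positivity : 0 ≤ 4 * (Fintype.card J * l))
  set B : Finset ι := {i | |(V *ᵥ x) i| = 4 * (Fintype.card J * l)}
  have hB : 4 * (#B : ℝ) ≤ Fintype.card J := by
    refine four_mul_le_of_mul_cosh_le (Nat.cast_nonneg _) hn hk ?_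
    rw [← hlog]
    convert hcosh using 3 <;> ring
  have hB : 4 * #B ≤ Fintype.card J := by exact_mod_cast hB
  exact ⟨x, hx, hVx, by lia⟩

lemma exists_partial_coloring_eq_neg_one [Nonempty J] {V : Matrix ι J ℝ} {c : ℝ} (hc : 0 < c)
    (hV : ∀ i j, |V i j| ≤ c) :
    ∃ x : J → ℝ, (∀ j, |x j| ≤ 1) ∧
      ‖V *ᵥ x‖ ≤
        c * (4 * (Fintype.card J * sparsificationRate (Fintype.card ι) (Fintype.card J))) ∧
      Fintype.card J ≤ 8 * #{j | x j = -1} := by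
  obtain ⟨x, hx, hVx, hcard⟩ := exists_partial_coloring_s2 (V := c⁻¹ • V) fun i j => by
    rw [Matrix.smul_apply, smul_eq_mul, abs_mul, abs_inv, abs_of_pos hc, inv_mul_le_one₀ hc]
    exact hV i j
  rw [Matrix.smul_mulVec, norm_smul, norm_inv, Real.norm_of_nonneg hc.le, inv_mul_le_iff₀ hc]
    at hVx
  have hsigns : #{j | |x j| = 1} ≤ #{j | x j = 1} + #{j | x j = -1} := by
    rw [filter_congr fun j _ => abs_eq (a := x j) zero_le_one, filter_or]
    exact card_union_le _ _
  rcases le_total #{j | x j = 1} #{j | x j = -1} with h | h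
  · exact ⟨x, hx, hVx, by lia⟩
  · refine ⟨-x, by simpa using hx, by simpa [Matrix.mulVec_neg] using hVx, ?_⟩
    simp only [Pi.neg_apply, neg_inj]
    lia

lemma exists_partial_coloring_on_s2 {S : Finset J} (hS : S.Nonempty) {V : Matrix ι J ℝ} {c : ℝ}
    (hc : 0 < c) (hV : ∀ i, ∀ j ∈ S, |V i j| ≤ c) :
    ∃ y : J → ℝ, (∀ j, |y j| ≤ 1) ∧
      ‖V *ᵥ y‖ ≤ c * (4 * (#S * sparsificationRate (Fintype.card ι) #S)) ∧
      #S ≤ 8 * #{j ∈ S | y j = -1} := by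
  have : Nonempty S := hS.to_subtype
  obtain ⟨x, hx, hVx, hcard⟩ := exists_partial_coloring_eq_neg_one
    (V := V.submatrix id ((↑) : S → J)) hc fun i j => hV i j j.2
  let y : J → ℝ := fun j => if h : j ∈ S then x ⟨j, h⟩ else 0
  have hyx (j : S) : y j = x j := by simp [y]
  have hy0 (j : J) (h : j ∉ S) : y j = 0 := by simp [y, h]
  have hVy : V *ᵥ y = V.submatrix id (↑) *ᵥ x := by
    ext i
    simp only [Matrix.mulVec, dotProduct, Matrix.submatrix_apply, id, ← hyx]
    rw [sum_coe_sort S fun j => V i j * y j]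
    exact (sum_subset (subset_univ S) fun j _ h => by simp [hy0 j h]).symm
  have hcard_y : #{j : S | x j = -1} = #{j ∈ S | y j = -1} := by
    simp only [card_filter, ← hyx]
    exact sum_coe_sort S fun j => if y j = -1 then 1 else 0
  refine ⟨y, fun j => ?_, ?_, ?_⟩
  · by_cases h : j ∈ S
    · simpa only [← hyx] using hx ⟨j, h⟩
    · simp [hy0 j h]
  · simpa [hVy] using hVx
  · simpa [← hcard_y] using hcard

end PartialColoring

section Sparsification

variable {ι J : Type*} [Fintype ι] [Fintype J]

lemma norm_mulVec_le_sum_abs {U : Matrix ι J ℝ} (hU : ∀ i j, |U i j| ≤ 1) (w : J → ℝ) :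
    ‖U *ᵥ w‖ ≤ ∑ j, |w j| := by
  refine (pi_norm_le_iff_of_nonneg (sum_nonneg fun j _ => abs_nonneg _)).2 fun i =>
    (abs_sum_le_sum_abs _ _).trans (sum_le_sum fun j _ => ?_)
  rw [abs_mul]
  exact mul_le_of_le_one_left (abs_nonneg _) (hU i j)

lemma exists_normalized_mulVec_near {U : Matrix ι J ℝ} (hU : ∀ i j, |U i j| ≤ 1) {w u : J → ℝ}
    (hw : ∑ j, |w j| = 1) {ε : ℝ} (hu : |∑ j, |u j| - 1| ≤ ε)
    (hUu : ‖U *ᵥ u - U *ᵥ w‖ ≤ ε) :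
    ∃ w' : J → ℝ, ∑ j, |w' j| = 1 ∧ #{j | w' j ≠ 0} ≤ max 1 #{j | u j ≠ 0} ∧
      ‖U *ᵥ w' - U *ᵥ w‖ ≤ 2 * ε := by
  set s := ∑ j, |u j| with hs
  have hs_nonneg : 0 ≤ s := sum_nonneg fun j _ => abs_nonneg (u j)
  rcases hs_nonneg.eq_or_lt with hs0 | hs0
  · have hε : 1 ≤ ε := by simpa [← hs0] using hu
    obtain ⟨j, -⟩ : ∃ j, w j ≠ 0 := by
      by_contra! h
      simp [h] at hw
    have hsingle : ∑ i, |(Pi.single j 1 : J → ℝ) i| = 1 := by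
      simp [Pi.single_apply, apply_ite abs]
    refine ⟨Pi.single j 1, hsingle, le_max_of_le_left ?_, ?_⟩
    · exact (card_eq_one.2 ⟨j, by ext; simp [Pi.single_apply]⟩).le
    · calc ‖U *ᵥ Pi.single j 1 - U *ᵥ w‖ ≤ ‖U *ᵥ Pi.single j 1‖ + ‖U *ᵥ w‖ := norm_sub_le _ _
        _ ≤ 1 + 1 := add_le_add ((norm_mulVec_le_sum_abs hU _).trans hsingle.le)
            ((norm_mulVec_le_sum_abs hU w).trans hw.le)
        _ ≤ 2 * ε := by linarith
  · refine ⟨s⁻¹ • u, ?_, le_max_of_le_right ?_, ?_⟩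
    · simp [abs_mul, abs_of_pos hs0, ← mul_sum, ← hs, hs0.ne']
    · simp [hs0.ne']
    · have hrescale : ‖U *ᵥ (s⁻¹ • u) - U *ᵥ u‖ ≤ ε :=
        calc ‖U *ᵥ (s⁻¹ • u) - U *ᵥ u‖ = |s⁻¹ - 1| * ‖U *ᵥ u‖ := by
              rw [Matrix.mulVec_smul, ← Real.norm_eq_abs, ← norm_smul, sub_smul, one_smul]
          _ ≤ |s⁻¹ - 1| * |s| := by
              gcongr
              exact (norm_mulVec_le_sum_abs hU u).trans (le_abs_self s)
          _ = |s - 1| := by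
              rw [← abs_mul, sub_mul, inv_mul_cancel₀ hs0.ne', one_mul, abs_sub_comm]
          _ ≤ ε := hu
      linarith [norm_sub_le_norm_sub_add_norm_sub (U *ᵥ (s⁻¹ • u)) (U *ᵥ u) (U *ᵥ w)]

lemma card_ne_zero_le_two_mul_card_light {w : J → ℝ} (hw : ∑ j, |w j| = 1) :
    #{j | w j ≠ 0} ≤ 2 * #{j | w j ≠ 0 ∧ |w j| ≤ 2 / #{j | w j ≠ 0}} := by
  set k := #{j | w j ≠ 0}
  rcases k.eq_zero_or_pos with hk | hk
  · lia
  have hk : (0 : ℝ) < k := by exact_mod_cast hk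
  set H : Finset J := {j | w j ≠ 0 ∧ ¬ |w j| ≤ 2 / k} with hH
  have hsplit : #{j | w j ≠ 0 ∧ |w j| ≤ 2 / (k : ℝ)} + #H = k := by
    simp only [hH, ← filter_filter]
    exact card_filter_add_card_filter_not _
  have hmarkov : #H • (2 / (k : ℝ)) ≤ 1 :=
    (card_nsmul_le_sum H (fun j => |w j|) _ fun j hj =>
      (not_le.1 ((mem_filter_univ j).1 hj).2).le).trans
      ((sum_le_univ_sum_of_nonneg fun j => abs_nonneg (w j)).trans hw.le)
  have hheavy : 2 * #H ≤ k := by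
    rw [nsmul_eq_mul, ← mul_div_assoc, div_le_one hk, mul_comm] at hmarkov
    exact_mod_cast hmarkov
  lia

lemma exists_coloring_of_light_entries {U : Matrix ι J ℝ} (hU : ∀ i j, |U i j| ≤ 1) {w : J → ℝ}
    (hw : ∑ j, |w j| = 1) :
    ∃ y : J → ℝ, (∀ j, |y j| ≤ 1) ∧
      |∑ j, |w j| * y j| ≤ 16 * sparsificationRate (Fintype.card ι) #{j | w j ≠ 0} ∧
      ‖U *ᵥ (w * y)‖ ≤ 16 * sparsificationRate (Fintype.card ι) #{j | w j ≠ 0} ∧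
      #{j | w j ≠ 0} ≤ 16 * #{j | w j ≠ 0 ∧ y j = -1} := by
  have hlight := card_ne_zero_le_two_mul_card_light hw
  have hsupp : 0 < #{j | w j ≠ 0} := by
    refine card_pos.2 (filter_nonempty_iff.2 ?_)
    by_contra! h
    simp [h] at hw
  set k := #{j | w j ≠ 0}
  set S : Finset J := {j | w j ≠ 0 ∧ |w j| ≤ 2 / k}
  set n : ℝ := (Fintype.card ι : ℝ)
  have hk : (0 : ℝ) < k := by exact_mod_cast hsupp
  have hSk : #S ≤ k := card_le_card (monotone_filter_right univ fun _ _ hj => hj.1)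
  let V : Matrix (Option ι) J ℝ := Matrix.of fun o j => o.elim |w j| fun i => U i j * w j
  have hV (o : Option ι) (j : J) (hj : j ∈ S) : |V o j| ≤ 2 / k := by
    refine le_trans ?_ ((mem_filter_univ j).1 hj).2
    rcases o with _ | i
    · simp [V]
    · simpa [V, abs_mul] using mul_le_of_le_one_left (abs_nonneg (w j)) (hU i j)
  obtain ⟨y, hy, hVy, hcard⟩ :=
    exists_partial_coloring_on_s2 (card_pos.1 (by lia : 0 < #S)) (by positivity) hV
  have hrate : sparsificationRate (n + 1) #S ≤ 2 * sparsificationRate n k :=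
    sparsificationRate_add_one_le (Nat.cast_nonneg _) hk
      (by exact_mod_cast (by lia : 1 ≤ #S)) (by exact_mod_cast hlight)
  have herr : ‖V *ᵥ y‖ ≤ 16 * sparsificationRate n k :=
    calc ‖V *ᵥ y‖ ≤ 2 / k * (4 * (#S * sparsificationRate (n + 1) #S)) := by simpa [n] using hVy
      _ ≤ 2 / k * (4 * (k * (2 * sparsificationRate n k))) := by
          gcongr
          exact sparsificationRate_nonneg _ _
      _ = 16 * sparsificationRate n k := by field_simp; ring
  have hentry (o : Option ι) : |(V *ᵥ y) o| ≤ 16 * sparsificationRate n k :=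
    (norm_le_pi_norm _ o).trans herr
  refine ⟨y, hy, hentry none, ?_, ?_⟩
  · refine (pi_norm_le_iff_of_nonneg ((norm_nonneg _).trans herr)).2 fun i => ?_
    simpa [V, Matrix.mulVec, dotProduct, mul_assoc] using hentry (some i)
  · have : #{j ∈ S | y j = -1} ≤ #{j | w j ≠ 0 ∧ y j = -1} := card_le_card fun j hj => by
      simp only [S, mem_filter, mem_univ, true_and] at hj ⊢
      exact ⟨hj.1.1, hj.2⟩
    lia

lemma exists_smaller_support {U : Matrix ι J ℝ} (hU : ∀ i j, |U i j| ≤ 1) {w : J → ℝ}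
    (hw : ∑ j, |w j| = 1) (hk : 2 ≤ #{j | w j ≠ 0}) :
    ∃ w' : J → ℝ, ∑ j, |w' j| = 1 ∧ 16 * #{j | w' j ≠ 0} ≤ 15 * #{j | w j ≠ 0} ∧
      ‖U *ᵥ w' - U *ᵥ w‖ ≤ 32 * sparsificationRate (Fintype.card ι) #{j | w j ≠ 0} := by
  obtain ⟨y, hy, hmass, hUy, hcard⟩ := exists_coloring_of_light_entries hU hw
  have hsum : ∑ j, |(w + w * y) j| - 1 = ∑ j, |w j| * y j := by
    rw [sub_eq_iff_eq_add, ← hw, ← sum_add_distrib]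
    refine sum_congr rfl fun j _ => ?_
    have : 0 ≤ 1 + y j := by linarith [(abs_le.1 (hy j)).1]
    rw [Pi.add_apply, Pi.mul_apply, ← mul_one_add, abs_mul, abs_of_nonneg this]
    ring
  obtain ⟨w', hw', hcard', hUw'⟩ := exists_normalized_mulVec_near hU hw
    (u := w + w * y) (ε := 16 * sparsificationRate (Fintype.card ι) #{j | w j ≠ 0}) (by rwa [hsum])
    (by rwa [Matrix.mulVec_add, add_sub_cancel_left])
  have hkilled : #{j | (w + w * y) j ≠ 0} + #{j | w j ≠ 0 ∧ y j = -1} ≤ #{j | w j ≠ 0} := by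
    have hdisj : Disjoint ({j | (w + w * y) j ≠ 0} : Finset J)
        ({j | w j ≠ 0 ∧ y j = -1} : Finset J) :=
      disjoint_filter.2 fun j _ hj hj' => hj (by simp [hj'.2])
    rw [← card_union_of_disjoint hdisj, ← filter_or]
    refine card_le_card (monotone_filter_right univ fun j _ hj h0 => ?_)
    simp [h0] at hj
  exact ⟨w', hw', by lia, hUw'.trans (by linarith)⟩

lemma exists_sparse_of_le_card_ne_zero {U : Matrix ι J ℝ} (hU : ∀ i j, |U i j| ≤ 1) {T : ℕ}
    (hT : 0 < T) (w : J → ℝ) (hw : ∑ j, |w j| = 1) (hTw : T ≤ #{j | w j ≠ 0}) :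
    ∃ w' : J → ℝ, ∑ j, |w' j| = 1 ∧ #{j | w' j ≠ 0} ≤ T ∧
      ‖U *ᵥ w' - U *ᵥ w‖ ≤ 1024 * (2 * sparsificationRate (Fintype.card ι) T -
        sparsificationRate (Fintype.card ι) #{j | w j ≠ 0}) := by
  induction hk : #{j | w j ≠ 0} using Nat.strong_induction_on generalizing w with
  | _ k ih =>
    rw [hk] at hTw
    have hn : (0 : ℝ) ≤ Fintype.card ι := Nat.cast_nonneg _
    have hrate := sparsificationRate_le hn (by exact_mod_cast hT : (0 : ℝ) < T)
      (by exact_mod_cast hTw : (T : ℝ) ≤ k)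
    have hnonneg := sparsificationRate_nonneg (Fintype.card ι) k
    rcases hTw.eq_or_lt with rfl | hlt
    · exact ⟨w, hw, hk.le, by rw [sub_self, norm_zero]; linarith⟩
    obtain ⟨w₁, hw₁, hcard₁, hU₁⟩ := exists_smaller_support hU hw (by lia)
    rw [hk] at hcard₁ hU₁
    rcases le_or_gt #{j | w₁ j ≠ 0} T with h | h
    · exact ⟨w₁, hw₁, h, by linarith⟩
    obtain ⟨w₂, hw₂, hcard₂, hU₂⟩ := ih _ (by lia) w₁ hw₁ h.le rfl
    -- `(33 / 32) ^ 2 * (15 / 16) ≤ 1`, and the loss of one step is `32 = 1024 * (33 / 32 - 1)`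
    -- times the rate.
    have hgrowth : 33 / 32 * sparsificationRate (Fintype.card ι) k ≤
        sparsificationRate (Fintype.card ι) #{j | w₁ j ≠ 0} := by
      refine mul_sparsificationRate_le hn (by exact_mod_cast hT.trans h) (by norm_num) ?_
      have : (16 : ℝ) * #{j | w₁ j ≠ 0} ≤ 15 * k := by exact_mod_cast hcard₁
      linarith
    refine ⟨w₂, hw₂, hcard₂, ?_⟩
    linarith [norm_sub_le_norm_sub_add_norm_sub (U *ᵥ w₂) (U *ᵥ w₁) (U *ᵥ w)]

theorem sparsification_min_margin_general {U : Matrix ι J ℝ} (hU : ∀ i j, |U i j| ≤ 1)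
    {w : J → ℝ} (hw : ∑ j, |w j| = 1) {T : ℕ} (hT : 0 < T) :
    ∃ w' : J → ℝ, ∑ j, |w' j| = 1 ∧ #{j | w' j ≠ 0} ≤ T ∧
      ‖U *ᵥ w' - U *ᵥ w‖ ≤ 2048 * √(Real.log (2 + Fintype.card ι / T) / T) := by
  rcases le_total T #{j | w j ≠ 0} with h | h
  · obtain ⟨w', hw', hcard, hnear⟩ := exists_sparse_of_le_card_ne_zero hU hT w hw h
    refine ⟨w', hw', hcard, ?_⟩
    change _ ≤ 2048 * sparsificationRate _ _
    linarith [sparsificationRate_nonneg (Fintype.card ι) #{j | w j ≠ 0}]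
  · exact ⟨w, hw, h, by rw [sub_self, norm_zero]; positivity⟩

lemma iInf_sub_norm_sub_le_iInf [Nonempty ι] (f g : ι → ℝ) :
    (⨅ i, f i) - ‖g - f‖ ≤ ⨅ i, g i := by
  refine le_ciInf fun i => ?_
  have hi : |g i - f i| ≤ ‖g - f‖ := norm_le_pi_norm (g - f) i
  linarith [ciInf_le (Set.finite_range f).bddBelow i, (abs_le.1 hi).1]

end Sparsification

/-- Sparsification preserving the minimal margin: one can sparsify `w` to `w'` with at
most `T` nonzero entries so that the minimum coordinate of `Uw'` is at least the
minimum coordinate of `Uw` minus `C √(log(2 + n/T)/T)`. -/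
theorem sparsification_min_margin :
    ∃ C : ℝ, 0 < C ∧
      ∀ (n m : ℕ), 0 < n → 0 < m →
        ∀ U : Matrix (Fin n) (Fin m) ℝ, (∀ i j, U i j ∈ Set.Icc (-1 : ℝ) 1) →
          ∀ w : Fin m → ℝ, (∑ j, |w j|) = 1 →
            ∀ T : ℕ, 0 < T → T ≤ m →
              ∃ w' : Fin m → ℝ,
                (∑ j, |w' j|) = 1 ∧
                (Finset.univ.filter (fun j => w' j ≠ 0)).card ≤ T ∧
                (⨅ i, U.mulVec w' i) ≥
                  (⨅ i, U.mulVec w i) -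
                    C * Real.sqrt (Real.log (2 + (n : ℝ) / (T : ℝ)) / (T : ℝ)) := by
  refine ⟨2048, by norm_num, fun n m hn _ U hU w hw T hT _ => ?_⟩
  have : Nonempty (Fin n) := ⟨⟨0, hn⟩⟩
  obtain ⟨w', hw', hcard, hnear⟩ :=
    sparsification_min_margin_general (fun i j => abs_le.2 (hU i j)) hw hT
  rw [Fintype.card_fin] at hnear
  exact ⟨w', hw', hcard, (sub_le_sub_left hnear _).trans (iInf_sub_norm_sub_le_iInf _ _)⟩
end

section
/- There exists a universal constant C > 0 such that for all positive integers n, T with T ≤ n and every matrix A ∈ [−1,1]^{n×T}, there exists a sign vector x ∈ {−1,+1}^T with ‖Ax‖_∞ ≤ C·√(T·ln(e·n/T)). -/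
open Finset
open scoped Classical

/-!
Partial colouring: send a sign vector `x` to the integer vector of rounded discrepancies
`round ((A x)ᵢ / Δ)`. By the sub-Gaussian tail these integers are rarely nonzero, so a weighted
pigeonhole argument finds a fibre of almost `2 ^ T` sign vectors. Such a fibre does not fit into a
Hamming ball of radius `T / 4`, so it contains two sign vectors `x`, `z` that differ in more than
`T / 4` places, and `(x - z) / 2` has discrepancy at most `Δ / 2` and at most `3 T / 4` zeros.
Recursing on the zeros gives discrepancies that decay geometrically.
-/

section SignCube

variable {ι : Type*} [Fintype ι]

/-- The vertices `{-1, 1} ^ ι` of the cube, as a finset of real vectors, so that sums over it are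
(unnormalized) expectations over uniformly random signs. -/
noncomputable def signCube (ι : Type*) [Fintype ι] : Finset (ι → ℝ) :=
  Fintype.piFinset fun _ => {-1, 1}

lemma mem_signCube {x : ι → ℝ} : x ∈ signCube ι ↔ ∀ j, x j = -1 ∨ x j = 1 := by
  simp only [signCube, Fintype.mem_piFinset, mem_insert, mem_singleton]

lemma card_neg_one_one : #({-1, 1} : Finset ℝ) = 2 :=
  card_pair (by norm_num)

lemma card_signCube : #(signCube ι) = 2 ^ Fintype.card ι := by
  rw [signCube, Fintype.card_piFinset, prod_const, card_neg_one_one, card_univ]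

lemma signCube_nonempty : (signCube ι).Nonempty :=
  ⟨1, mem_signCube.2 fun _ => Or.inr rfl⟩

lemma sum_exp_dotProduct_signCube (a : ι → ℝ) :
    ∑ x ∈ signCube ι, Real.exp (a ⬝ᵥ x) = ∏ j, (2 * Real.cosh (a j)) := by
  have hpair : ((-1 : ℝ)) ≠ 1 := by norm_num
  simp only [dotProduct, Real.exp_sum, signCube]
  rw [sum_prod_piFinset {-1, 1} fun j s => Real.exp (a j * s)]
  simp only [sum_pair hpair, Real.cosh_eq, mul_neg, mul_one]
  exact prod_congr rfl fun j _ => by ring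

lemma sum_exp_dotProduct_signCube_le (a : ι → ℝ) :
    ∑ x ∈ signCube ι, Real.exp (a ⬝ᵥ x) ≤
      2 ^ Fintype.card ι * Real.exp ((∑ j, a j ^ 2) / 2) := by
  calc ∑ x ∈ signCube ι, Real.exp (a ⬝ᵥ x)
      = ∏ j, (2 * Real.cosh (a j)) := sum_exp_dotProduct_signCube a
    _ ≤ ∏ j, (2 * Real.exp (a j ^ 2 / 2)) := by
        gcongr with j
        exact Real.cosh_le_exp_half_sq (a j)
    _ = 2 ^ Fintype.card ι * Real.exp ((∑ j, a j ^ 2) / 2) := by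
        rw [prod_mul_distrib, prod_const, card_univ, ← Real.exp_sum, sum_div]

end SignCube

section HammingBall

variable {ι α : Type*} [Fintype ι] [DecidableEq ι] [DecidableEq α]

lemma sum_pow_hammingDist_piFinset {R : Type*} [CommRing R] {s : Finset α} {x₀ : ι → α}
    (hx₀ : x₀ ∈ Fintype.piFinset fun _ => s) (r : R) :
    ∑ x ∈ Fintype.piFinset fun _ => s, r ^ hammingDist x₀ x =
      (1 + (#s - 1) * r) ^ Fintype.card ι := by
  have hprod (x : ι → α) : r ^ hammingDist x₀ x = ∏ j, if x₀ j = x j then 1 else r := by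
    rw [prod_ite, prod_const_one, one_mul, prod_const, hammingDist]
  have hcoord (j : ι) : ∑ a ∈ s, (if x₀ j = a then 1 else r) = 1 + (#s - 1) * r := by
    have hj := Fintype.mem_piFinset.1 hx₀ j
    rw [← add_sum_erase s _ hj, if_pos rfl,
      sum_congr rfl fun a ha => if_neg (ne_of_mem_erase ha).symm, sum_const, nsmul_eq_mul,
      card_erase_of_mem hj, Nat.cast_pred (card_pos.2 ⟨_, hj⟩)]
  simp only [hprod, sum_prod_piFinset s fun j a => if x₀ j = a then 1 else r, hcoord,
    prod_const, card_univ]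

lemma card_mul_pow_le_of_hammingDist_le_s5 {s : Finset α} {x₀ : ι → α}
    (hx₀ : x₀ ∈ Fintype.piFinset fun _ => s) {S : Finset (ι → α)}
    (hS : S ⊆ Fintype.piFinset fun _ => s) {d : ℕ} (hd : ∀ x ∈ S, hammingDist x₀ x ≤ d)
    {r : ℝ} (hr₀ : 0 ≤ r) (hr₁ : r ≤ 1) :
    #S * r ^ d ≤ (1 + (#s - 1) * r) ^ Fintype.card ι := by
  calc #S * r ^ d = ∑ _x ∈ S, r ^ d := by rw [sum_const, nsmul_eq_mul]
    _ ≤ ∑ x ∈ S, r ^ hammingDist x₀ x :=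
        sum_le_sum fun x hx => pow_le_pow_of_le_one hr₀ hr₁ (hd x hx)
    _ ≤ ∑ x ∈ Fintype.piFinset fun _ => s, r ^ hammingDist x₀ x :=
        sum_le_sum_of_subset_of_nonneg hS fun _ _ _ => pow_nonneg hr₀ _
    _ = (1 + (#s - 1) * r) ^ Fintype.card ι := sum_pow_hammingDist_piFinset hx₀ r

end HammingBall

lemma exists_card_lt_four_mul_hammingDist {ι : Type*} [Fintype ι] [Nonempty ι] {x₀ : ι → ℝ}
    (hx₀ : x₀ ∈ signCube ι) {S : Finset (ι → ℝ)} (hS : S ⊆ signCube ι)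
    (hcard : 2 ^ Fintype.card ι * Real.exp (-(Fintype.card ι / 10)) ≤ #S) :
    ∃ x ∈ S, Fintype.card ι < 4 * hammingDist x₀ x := by
  by_contra! hball
  set m := Fintype.card ι with hm
  -- With `r = (3 / 4) ^ 4`, the bound `#S ≤ (1 + r) ^ m / r ^ (m / 4)` reads `(337 / 192) ^ m`.
  have hvol := card_mul_pow_le_of_hammingDist_le_s5 (d := m / 4) hx₀ hS
    (fun x hx => by have := hball x hx; omega)
    (r := (3 / 4) ^ 4) (by norm_num) (by norm_num)
  rw [card_neg_one_one, ← pow_mul, ← hm] at hvol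
  have hrad : (3 / 4 : ℝ) ^ m ≤ (3 / 4) ^ (4 * (m / 4)) :=
    pow_le_pow_of_le_one (by norm_num) (by norm_num) (by omega)
  have hle : #S * (3 / 4 : ℝ) ^ m ≤ (337 / 192) ^ m * (3 / 4) ^ m := by
    rw [← mul_pow]
    refine (mul_le_mul_of_nonneg_left hrad (Nat.cast_nonneg _)).trans (hvol.trans_eq ?_)
    norm_num
  have hlt : (337 / 192 : ℝ) ^ m < 2 ^ m * Real.exp (-(m / 10)) := by
    have hexp : Real.exp (-(m / 10)) = Real.exp (-(1 / 10)) ^ m := by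
      rw [← Real.exp_nat_mul]
      congr 1
      ring
    rw [hexp, ← mul_pow]
    exact pow_lt_pow_left₀ (by linarith [Real.add_one_le_exp (-(1 / 10) : ℝ)]) (by norm_num)
      Fintype.card_ne_zero
  exact (hlt.trans_le hcard).not_ge (le_of_mul_le_mul_right hle (by positivity))

section WeightedPigeonhole

lemma hasSum_pow_natAbs {q : ℝ} (hq₀ : 0 ≤ q) (hq₁ : q < 1) :
    HasSum (fun k : ℤ => q ^ k.natAbs) ((1 + q) / (1 - q)) := by
  have hgeom := hasSum_geometric_of_lt_one hq₀ hq₁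
  have hneg : HasSum (fun k : ℕ => q ^ (-((k : ℤ) + 1)).natAbs) (q * (1 - q)⁻¹) := by
    have hshift (k : ℕ) : (-((k : ℤ) + 1)).natAbs = k + 1 := by omega
    simpa only [hshift, pow_succ'] using hgeom.mul_left q
  have h := HasSum.of_nat_of_neg_add_one (f := fun k : ℤ => q ^ k.natAbs) hgeom hneg
  rwa [← one_add_mul, ← div_eq_mul_inv] at h

lemma sum_pow_natAbs_le_exp {q : ℝ} (hq₀ : 0 ≤ q) (hq : q ≤ 1 / 3) (F : Finset ℤ) :
    ∑ k ∈ F, q ^ k.natAbs ≤ Real.exp (3 * q) := by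
  calc ∑ k ∈ F, q ^ k.natAbs ≤ (1 + q) / (1 - q) :=
        sum_le_hasSum F (fun _ _ => by positivity) (hasSum_pow_natAbs hq₀ (by linarith))
    _ ≤ 3 * q + 1 := by
        rw [div_le_iff₀ (by linarith)]
        nlinarith
    _ ≤ Real.exp (3 * q) := Real.add_one_le_exp _

lemma card_mul_exp_le_sum_exp {α : Type*} (s : Finset α) {g : α → ℝ} {G : ℝ}
    (hg : #s * G ≤ ∑ x ∈ s, g x) :
    #s * Real.exp G ≤ ∑ x ∈ s, Real.exp (g x) := by
  have htangent (x : α) : Real.exp G * (g x - G + 1) ≤ Real.exp (g x) := by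
    calc Real.exp G * (g x - G + 1) ≤ Real.exp G * Real.exp (g x - G) := by
          gcongr
          exact Real.add_one_le_exp _
      _ = Real.exp (g x) := by rw [← Real.exp_add, add_sub_cancel]
  calc #s * Real.exp G ≤ Real.exp G * (∑ x ∈ s, g x - #s * G + #s) := by
        nlinarith [Real.exp_pos G]
    _ = ∑ x ∈ s, Real.exp G * (g x - G + 1) := by
        simp only [← mul_sum, sum_add_distrib, sum_sub_distrib, sum_const, nsmul_eq_mul, mul_one]
    _ ≤ ∑ x ∈ s, Real.exp (g x) := sum_le_sum fun x _ => htangent x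

variable {α κ : Type*} [Fintype κ]

lemma sum_prod_pow_natAbs_le (s : Finset α) (b : α → κ → ℤ) {q N : ℝ} (hq₀ : 0 ≤ q)
    (hq : q ≤ 1 / 3) (hN : ∀ v, #{x ∈ s | b x = v} ≤ N) :
    ∑ x ∈ s, ∏ i, q ^ (b x i).natAbs ≤ N * Real.exp (3 * q * Fintype.card κ) := by
  have hN₀ : 0 ≤ N := (Nat.cast_nonneg _).trans (hN 0)
  let F : Finset ℤ := s.biUnion fun x => univ.image (b x)
  have hmaps : ∀ x ∈ s, b x ∈ Fintype.piFinset fun _ => F := fun x hx =>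
    Fintype.mem_piFinset.2 fun i => mem_biUnion.2 ⟨x, hx, mem_image_of_mem _ (mem_univ i)⟩
  have hfiber (v : κ → ℤ) : ∑ x ∈ s with b x = v, ∏ i, q ^ (b x i).natAbs ≤
      N * ∏ i, q ^ (v i).natAbs := by
    rw [sum_congr rfl fun x hx => by rw [(mem_filter.1 hx).2], sum_const, nsmul_eq_mul]
    exact mul_le_mul_of_nonneg_right (hN v) (by positivity)
  calc ∑ x ∈ s, ∏ i, q ^ (b x i).natAbs
      = ∑ v ∈ Fintype.piFinset fun _ => F, ∑ x ∈ s with b x = v, ∏ i, q ^ (b x i).natAbs :=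
        (sum_fiberwise_of_maps_to hmaps _).symm
    _ ≤ ∑ v ∈ Fintype.piFinset fun _ => F, N * ∏ i, q ^ (v i).natAbs :=
        sum_le_sum fun v _ => hfiber v
    _ = N * (∑ k ∈ F, q ^ k.natAbs) ^ Fintype.card κ := by
        rw [← mul_sum, sum_prod_piFinset F fun _ k => q ^ k.natAbs, prod_const, card_univ]
    _ ≤ N * Real.exp (3 * q) ^ Fintype.card κ := by
        gcongr
        exact sum_pow_natAbs_le_exp hq₀ hq F
    _ = N * Real.exp (3 * q * Fintype.card κ) := by
        rw [← Real.exp_nat_mul, mul_comm (3 * q)]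

/-- Each `b x` gets the weight `∏ i, exp (-l * |b x i|)`: the total weight is large by Jensen's
inequality, while all of `κ → ℤ` has weight at most `exp (3 * exp (-l) * card κ)`. -/
lemma exists_exp_le_card_fiber {s : Finset α} (hs : s.Nonempty) (b : α → κ → ℤ) {l M : ℝ}
    (hl : Real.exp (-l) ≤ 1 / 3) (hM : ∑ x ∈ s, ∑ i, ((b x i).natAbs : ℝ) ≤ #s * M) :
    ∃ x₀ ∈ s, #s * Real.exp (-(l * M + 3 * Real.exp (-l) * Fintype.card κ)) ≤
      #{x ∈ s | b x = b x₀} := by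
  have hl₀ : 0 ≤ l := neg_nonpos.1 (Real.exp_le_one_iff.1 (hl.trans (by norm_num)))
  obtain ⟨x₀, hx₀, hmax⟩ := exists_max_image s (fun x₀ => #{x ∈ s | b x = b x₀}) hs
  refine ⟨x₀, hx₀, ?_⟩
  set N := #{x ∈ s | b x = b x₀}
  have hN (v : κ → ℤ) : (#{x ∈ s | b x = v} : ℝ) ≤ N := by
    rcases (filter (b · = v) s).eq_empty_or_nonempty with hempty | ⟨x, hx⟩
    · rw [hempty, card_empty, Nat.cast_zero]
      positivity
    · obtain ⟨hxs, rfl⟩ := mem_filter.1 hx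
      exact_mod_cast hmax x hxs
  have hweight (x : α) : ∏ i, Real.exp (-l) ^ (b x i).natAbs =
      Real.exp (-(l * ∑ i, ((b x i).natAbs : ℝ))) := by
    rw [prod_pow_eq_pow_sum, ← Real.exp_nat_mul]
    push_cast
    ring_nf
  have hupper := sum_prod_pow_natAbs_le s b (Real.exp_pos (-l)).le hl hN
  have hlower : #s * Real.exp (-(l * M)) ≤ ∑ x ∈ s, ∏ i, Real.exp (-l) ^ (b x i).natAbs := by
    simp only [hweight]
    refine card_mul_exp_le_sum_exp s ?_
    rw [sum_neg_distrib, ← mul_sum]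
    linarith [mul_le_mul_of_nonneg_left hM hl₀]
  rw [neg_add, Real.exp_add, ← mul_assoc, Real.exp_neg (3 * _ * _), ← div_eq_mul_inv,
    div_le_iff₀ (Real.exp_pos _)]
  exact hlower.trans hupper

end WeightedPigeonhole

section Rounding

lemma natAbs_round_le_exp {s : ℝ} (hs : 1 ≤ s) (u : ℝ) :
    ((round u).natAbs : ℝ) ≤ Real.exp (s * (2 * |u| - 1)) := by
  rcases eq_or_ne (round u) 0 with h₀ | h₀
  · rw [h₀, Int.natAbs_zero, Nat.cast_zero]
    positivity
  have hone : (1 : ℝ) ≤ |(round u : ℝ)| := by exact_mod_cast Int.one_le_abs h₀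
  have hround : |(round u : ℝ)| ≤ |u| + 1 / 2 := by
    have hsub := abs_sub_abs_le_abs_sub (round u : ℝ) u
    rw [abs_sub_comm] at hsub
    linarith [abs_sub_round u]
  rw [Nat.cast_natAbs, Int.cast_abs]
  nlinarith [Real.add_one_le_exp (s * (2 * |u| - 1))]

lemma natAbs_round_div_le {s D : ℝ} (hs : 1 ≤ s) (hD : 0 < D) (u : ℝ) :
    ((round (u / D)).natAbs : ℝ) ≤
      Real.exp (-s) * (Real.exp (2 * s / D * u) + Real.exp (-(2 * s / D * u))) := by
  have ht : 0 < 2 * s / D := by positivity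
  calc ((round (u / D)).natAbs : ℝ) ≤ Real.exp (s * (2 * |u / D| - 1)) := natAbs_round_le_exp hs _
    _ = Real.exp (-s) * Real.exp |2 * s / D * u| := by
        rw [← Real.exp_add, abs_div, abs_mul, abs_of_pos hD, abs_of_pos ht]
        ring_nf
    _ ≤ Real.exp (-s) * (Real.exp (2 * s / D * u) + Real.exp (-(2 * s / D * u))) := by
        gcongr
        exact Real.exp_abs_le _

lemma abs_sub_le_of_round_div_eq {u v D : ℝ} (hD : 0 < D) (h : round (u / D) = round (v / D)) :
    |u - v| ≤ D := by
  have hu := abs_sub_round (u / D)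
  have hv := abs_sub_round (v / D)
  rw [h] at hu
  have hdiv : |u / D - v / D| ≤ 1 := by
    linarith [abs_sub_le (u / D) (round (v / D)) (v / D), abs_sub_comm (v / D) (round (v / D))]
  rwa [← sub_div, abs_div, abs_of_pos hD, div_le_one hD] at hdiv

variable {ι : Type*} [Fintype ι]

lemma sum_natAbs_round_dotProduct_le {a : ι → ℝ} {V D : ℝ} (hV : 0 < V)
    (ha : ∑ j, a j ^ 2 ≤ V) (hD : 0 < D) (hVD : 4 * V ≤ D ^ 2) :
    ∑ x ∈ signCube ι, ((round (a ⬝ᵥ x / D)).natAbs : ℝ) ≤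
      2 ^ Fintype.card ι * (2 * Real.exp (-(D ^ 2 / (8 * V)))) := by
  -- `s` minimizes the Chernoff exponent `2 * s ^ 2 * V / D ^ 2 - s`.
  set s := D ^ 2 / (4 * V) with hs
  set t := 2 * s / D with ht
  have hone : 1 ≤ s := by rwa [hs, one_le_div (by positivity)]
  have hpoint (x : ι → ℝ) : ((round (a ⬝ᵥ x / D)).natAbs : ℝ) ≤
      Real.exp (-s) * (Real.exp ((t • a) ⬝ᵥ x) + Real.exp (((-t) • a) ⬝ᵥ x)) := by
    rw [smul_dotProduct, smul_dotProduct, smul_eq_mul, smul_eq_mul, neg_mul]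
    exact natAbs_round_div_le hone hD _
  have hmgf (c : ℝ) (hc : c ^ 2 = t ^ 2) : ∑ x ∈ signCube ι, Real.exp ((c • a) ⬝ᵥ x) ≤
      2 ^ Fintype.card ι * Real.exp (s / 2) := by
    refine (sum_exp_dotProduct_signCube_le _).trans ?_
    have hexponent : t ^ 2 * V = s := by
      rw [ht, hs]
      field_simp
      norm_num
    simp only [Pi.smul_apply, smul_eq_mul, mul_pow, ← mul_sum, hc]
    gcongr
    exact (mul_le_mul_of_nonneg_left ha (sq_nonneg t)).trans_eq hexponent
  calc ∑ x ∈ signCube ι, ((round (a ⬝ᵥ x / D)).natAbs : ℝ)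
      ≤ Real.exp (-s) * (∑ x ∈ signCube ι, Real.exp ((t • a) ⬝ᵥ x) +
          ∑ x ∈ signCube ι, Real.exp (((-t) • a) ⬝ᵥ x)) := by
        rw [← sum_add_distrib, mul_sum]
        exact sum_le_sum fun x _ => hpoint x
    _ ≤ Real.exp (-s) * (2 ^ Fintype.card ι * Real.exp (s / 2) +
          2 ^ Fintype.card ι * Real.exp (s / 2)) := by
        gcongr
        · exact hmgf t rfl
        · exact hmgf (-t) (neg_sq t)
    _ = 2 ^ Fintype.card ι * (2 * Real.exp (-(D ^ 2 / (8 * V)))) := by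
        have hexp : -(D ^ 2 / (8 * V)) = -s + s / 2 := by
          rw [hs]
          field_simp
          norm_num
        rw [hexp, Real.exp_add]
        ring

end Rounding

section PartialColoring

lemma exp_neg_natCast_le (k : ℕ) : Real.exp (-k) ≤ (1 / 2) ^ k := by
  have htwo : (2 : ℝ) ≤ Real.exp 1 := by linarith [Real.add_one_le_exp 1]
  rw [Real.exp_neg, ← Real.exp_one_pow, one_div, inv_pow]
  gcongr

/-- The two terms are the exponents lost in `exists_exp_le_card_fiber` when `l = 6 * L` and every
coordinate has mean at most `2 * exp (-(8 * L))`. -/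
lemma rounding_cost_le {n m L : ℝ} (hm : 0 ≤ m) (hL : 1 ≤ L) (hn : n ≤ Real.exp (L - 1) * m) :
    6 * L * (n * (2 * Real.exp (-(8 * L)))) + 3 * Real.exp (-(6 * L)) * n ≤ m / 10 := by
  have hdecay (c : ℝ) : Real.exp (-(c * L)) * n ≤ Real.exp (-((c - 1) * L + 1)) * m := by
    calc Real.exp (-(c * L)) * n ≤ Real.exp (-(c * L)) * (Real.exp (L - 1) * m) := by gcongr
      _ = Real.exp (-((c - 1) * L + 1)) * m := by
          rw [← mul_assoc, ← Real.exp_add]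
          ring_nf
  have hmean : L * Real.exp (-(7 * L + 1)) ≤ 1 / 256 := by
    calc L * Real.exp (-(7 * L + 1)) ≤ Real.exp (L - 1) * Real.exp (-(7 * L + 1)) := by
          gcongr
          linarith [Real.add_one_le_exp (L - 1)]
      _ = Real.exp (-(6 * L + 2)) := by
          rw [← Real.exp_add]
          ring_nf
      _ ≤ Real.exp (-(8 : ℕ)) := by
          gcongr
          push_cast
          linarith
      _ ≤ 1 / 256 := (exp_neg_natCast_le 8).trans_eq (by norm_num)
  have hweight : Real.exp (-(5 * L + 1)) ≤ 1 / 64 := by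
    calc Real.exp (-(5 * L + 1)) ≤ Real.exp (-(6 : ℕ)) := by
          gcongr
          push_cast
          linarith
      _ ≤ 1 / 64 := (exp_neg_natCast_le 6).trans_eq (by norm_num)
  have h₈ := hdecay 8
  have h₆ := hdecay 6
  norm_num only at h₈ h₆
  calc 6 * L * (n * (2 * Real.exp (-(8 * L)))) + 3 * Real.exp (-(6 * L)) * n
      = 12 * (L * (Real.exp (-(8 * L)) * n)) + 3 * (Real.exp (-(6 * L)) * n) := by ring
    _ ≤ 12 * (L * (Real.exp (-(7 * L + 1)) * m)) + 3 * (Real.exp (-(5 * L + 1)) * m) := by gcongr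
    _ = 12 * (L * Real.exp (-(7 * L + 1)) * m) + 3 * (Real.exp (-(5 * L + 1)) * m) := by ring
    _ ≤ 12 * (1 / 256 * m) + 3 * (1 / 64 * m) := by gcongr
    _ ≤ m / 10 := by linarith

open Matrix

variable {κ ι : Type*} [Fintype κ] [Fintype ι] [Nonempty ι]

lemma exists_far_round_mulVec_eq (A : Matrix κ ι ℝ) {V L : ℝ} (hV : 0 < V)
    (hA : ∀ i, ∑ j, A i j ^ 2 ≤ V) (hL : 1 ≤ L)
    (hn : Fintype.card κ ≤ Real.exp (L - 1) * Fintype.card ι) :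
    ∃ x ∈ signCube ι, ∃ z ∈ signCube ι, Fintype.card ι < 4 * hammingDist x z ∧
      ∀ i, round ((A *ᵥ x) i / (8 * √(V * L))) = round ((A *ᵥ z) i / (8 * √(V * L))) := by
  set D := 8 * √(V * L) with hD
  have hD₀ : 0 < D := by positivity
  have hDsq : D ^ 2 = 64 * (V * L) := by
    rw [hD, mul_pow, Real.sq_sqrt (by positivity)]
    norm_num
  have hexponent : D ^ 2 / (8 * V) = 8 * L := by
    rw [hDsq]
    field_simp
    norm_num
  let b (x : ι → ℝ) (i : κ) : ℤ := round ((A *ᵥ x) i / D)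
  have hmean : ∑ x ∈ signCube ι, ∑ i, ((b x i).natAbs : ℝ) ≤
      #(signCube ι) * (Fintype.card κ * (2 * Real.exp (-(8 * L)))) := by
    rw [sum_comm, card_signCube, ← hexponent]
    refine (sum_le_card_nsmul univ _ _ fun i _ =>
      sum_natAbs_round_dotProduct_le hV (hA i) hD₀ (by nlinarith)).trans_eq ?_
    rw [card_univ, nsmul_eq_mul]
    push_cast
    ring
  have hweight : Real.exp (-(6 * L)) ≤ 1 / 3 := by
    calc Real.exp (-(6 * L)) ≤ Real.exp (-(2 : ℕ)) := by
          gcongr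
          push_cast
          linarith
      _ ≤ 1 / 3 := (exp_neg_natCast_le 2).trans (by norm_num)
  obtain ⟨x, hx, hfiber⟩ :=
    exists_exp_le_card_fiber signCube_nonempty b hweight hmean
  have hlarge : 2 ^ Fintype.card ι * Real.exp (-(Fintype.card ι / 10)) ≤
      #{z ∈ signCube ι | b z = b x} := by
    refine le_trans ?_ hfiber
    rw [card_signCube, Nat.cast_pow, Nat.cast_ofNat]
    gcongr
    exact rounding_cost_le (Nat.cast_nonneg _) hL hn
  obtain ⟨z, hz, hfar⟩ := exists_card_lt_four_mul_hammingDist hx (filter_subset _ _) hlarge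
  obtain ⟨hzcube, hzb⟩ := mem_filter.1 hz
  exact ⟨x, hx, z, hzcube, hfar, fun i => (congrFun hzb i).symm⟩

lemma exists_partial_coloring_s5 (A : Matrix κ ι ℝ) {V L : ℝ} (hV : 0 < V)
    (hA : ∀ i, ∑ j, A i j ^ 2 ≤ V) (hL : 1 ≤ L)
    (hn : Fintype.card κ ≤ Real.exp (L - 1) * Fintype.card ι) :
    ∃ y : ι → ℝ, (∀ j, y j = 0 ∨ y j = -1 ∨ y j = 1) ∧
      4 * Fintype.card {j // y j = 0} ≤ 3 * Fintype.card ι ∧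
      ∀ i, |(A *ᵥ y) i| ≤ 4 * √(V * L) := by
  obtain ⟨x, hx, z, hz, hfar, hround⟩ := exists_far_round_mulVec_eq A hV hA hL hn
  rw [mem_signCube] at hx hz
  refine ⟨(2⁻¹ : ℝ) • (x - z), fun j => ?_, ?_, fun i => ?_⟩
  · rcases hx j with h | h <;> rcases hz j with h' | h' <;> norm_num [h, h']
  · have hzero (j : ι) : ((2⁻¹ : ℝ) • (x - z)) j = 0 ↔ x j = z j := by
      simp [sub_eq_zero]
    have hsplit := card_filter_add_card_filter_not (s := univ) fun j => x j = z j
    simp only [hzero, Fintype.card_subtype]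
    rw [card_univ] at hsplit
    rw [hammingDist] at hfar
    lia
  · rw [mulVec_smul, mulVec_sub, Pi.smul_apply, Pi.sub_apply, smul_eq_mul, abs_mul,
      abs_of_pos (by norm_num : (0 : ℝ) < 2⁻¹)]
    linarith [abs_sub_le_of_round_div_eq (by positivity) (hround i)]

end PartialColoring

section Recursion

open Matrix

/-- The order of magnitude `√(t (1 + log⁺ (n / t)))` of the discrepancy of `n` rows and `t` columns.
For `1 ≤ t ≤ n` it equals `√(t log (e n / t))`; the positive part makes it `√t` when `n < t`. -/
noncomputable def spencerScale (n t : ℝ) : ℝ :=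
  √(t * (1 + Real.posLog (n / t)))

lemma spencerScale_of_le {n t : ℝ} (ht : 0 < t) (htn : t ≤ n) :
    spencerScale n t = √(t * Real.log (Real.exp 1 * n / t)) := by
  have hratio : 1 ≤ n / t := (one_le_div ht).2 htn
  rw [spencerScale, Real.posLog_eq_log (hratio.trans (le_abs_self _)), mul_div_assoc,
    Real.log_mul (Real.exp_ne_zero 1) (by positivity), Real.log_exp]

lemma mul_one_sub_log_le {r : ℝ} (hr₀ : 0 < r) (hr : r ≤ 3 / 4) :
    r * (1 - Real.log r) ≤ (124 / 125) ^ 2 := by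
  set u := √r
  have hu₀ : 0 < u := Real.sqrt_pos.2 hr₀
  have hsq : r = u ^ 2 := (Real.sq_sqrt hr₀.le).symm
  have hlog : -Real.log r ≤ 2 * (u⁻¹ - 1) := by
    have := Real.log_le_sub_one_of_pos (inv_pos.2 hu₀)
    rw [Real.log_inv] at this
    rw [hsq, Real.log_pow, Nat.cast_ofNat]
    linarith
  calc r * (1 - Real.log r) ≤ r * (1 + 2 * (u⁻¹ - 1)) := by gcongr; linarith
    _ = 1 - (1 - u) ^ 2 := by
        rw [hsq]
        field_simp
        ring
    _ ≤ (124 / 125) ^ 2 := by nlinarith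

lemma posLog_div_le_add {t : ℝ} (ht : t ≠ 0) (n k : ℝ) :
    Real.posLog (n / k) ≤ Real.posLog (n / t) + Real.posLog (t / k) := by
  rw [← div_mul_div_cancel₀ ht]
  exact Real.posLog_mul

lemma spencerScale_le_of_le_three_fourths (n : ℝ) {t k : ℝ} (hkt : 4 * k ≤ 3 * t) :
    spencerScale n k ≤ 124 / 125 * spencerScale n t := by
  rcases le_or_gt k 0 with hk | hk
  · rw [spencerScale, Real.sqrt_eq_zero_of_nonpos (mul_nonpos_of_nonpos_of_nonneg hk
      (add_nonneg zero_le_one Real.posLog_nonneg))]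
    exact mul_nonneg (by norm_num) (Real.sqrt_nonneg _)
  have ht : 0 < t := by linarith
  set r := k / t with hr
  have hr₀ : 0 < r := by positivity
  have hr₁ : r ≤ 3 / 4 := by
    rw [hr, div_le_iff₀ ht]
    linarith
  have hlogr : 0 ≤ -Real.log r := neg_nonneg.2 (Real.log_nonpos hr₀.le (by linarith))
  have hposLog : Real.posLog (n / k) ≤ Real.posLog (n / t) - Real.log r := by
    have hinv : Real.posLog (t / k) = -Real.log r := by
      rw [← inv_div, Real.posLog_apply, Real.log_inv, max_eq_right hlogr]
    rw [sub_eq_add_neg, ← hinv]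
    exact posLog_div_le_add ht.ne' n k
  have hpos : 0 ≤ Real.posLog (n / t) := Real.posLog_nonneg
  have hmain : k * (1 + Real.posLog (n / k)) ≤
      (124 / 125) ^ 2 * (t * (1 + Real.posLog (n / t))) := by
    calc k * (1 + Real.posLog (n / k))
        ≤ k * ((1 - Real.log r) * (1 + Real.posLog (n / t))) := by
          gcongr
          nlinarith
      _ = r * (1 - Real.log r) * (t * (1 + Real.posLog (n / t))) := by
          rw [hr]
          field_simp
      _ ≤ (124 / 125) ^ 2 * (t * (1 + Real.posLog (n / t))) := by
          gcongr
          exact mul_one_sub_log_le hr₀ hr₁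
  refine (Real.sqrt_le_sqrt hmain).trans_eq ?_
  rw [Real.sqrt_mul (by positivity), Real.sqrt_sq (by norm_num), spencerScale]

variable {κ ι : Type*} [Fintype ι]

lemma mulVec_dite_eq_zero (A : Matrix κ ι ℝ) (y : ι → ℝ) (z : {j // y j = 0} → ℝ) :
    (A *ᵥ fun j => if h : y j = 0 then z ⟨j, h⟩ else y j) =
      A *ᵥ y + A.submatrix id Subtype.val *ᵥ z := by
  ext i
  simp only [mulVec, dotProduct, Pi.add_apply, submatrix_apply, id_eq]
  rw [← Fintype.sum_subtype_add_sum_subtype (y · = 0),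
    ← Fintype.sum_subtype_add_sum_subtype (y · = 0) fun j => A i j * y j]
  have hcolored (j : {j // ¬y j = 0}) : (if h : y j = 0 then z ⟨j, h⟩ else y j) = y j :=
    dif_neg j.2
  have huncolored (j : {j // y j = 0}) : (if h : y j = 0 then z ⟨j, h⟩ else y j) = z j :=
    dif_pos j.2
  have hzero (j : {j // y j = 0}) : A i j * y j = 0 := mul_eq_zero_of_right _ j.2
  simp only [hcolored, huncolored, hzero, sum_const_zero, zero_add, add_comm]

variable [Fintype κ]

lemma exists_partial_coloring_spencerScale [Nonempty ι] (A : Matrix κ ι ℝ)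
    (hA : ∀ i j, A i j ∈ Set.Icc (-1 : ℝ) 1) :
    ∃ y : ι → ℝ, (∀ j, y j = 0 ∨ y j = -1 ∨ y j = 1) ∧
      4 * Fintype.card {j // y j = 0} ≤ 3 * Fintype.card ι ∧
      ∀ i, |(A *ᵥ y) i| ≤ 4 * spencerScale (Fintype.card κ) (Fintype.card ι) := by
  have hι : (0 : ℝ) < Fintype.card ι := by exact_mod_cast Fintype.card_pos
  have hrow (i : κ) : ∑ j, A i j ^ 2 ≤ Fintype.card ι := by
    refine (sum_le_card_nsmul univ _ 1 fun j _ => ?_).trans_eq (by simp)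
    exact (sq_le_one_iff_abs_le_one _).2 (abs_le.2 (hA i j))
  refine exists_partial_coloring_s5 A hι hrow (le_add_of_nonneg_right Real.posLog_nonneg) ?_
  rw [add_sub_cancel_left, ← div_le_iff₀ hι]
  refine (Real.le_exp_log _).trans (Real.exp_le_exp.2 ?_)
  exact le_max_right _ _

theorem spencer_few_columns_general (A : Matrix κ ι ℝ) (hA : ∀ i j, A i j ∈ Set.Icc (-1 : ℝ) 1) :
    ∃ x : ι → ℝ, (∀ j, x j = -1 ∨ x j = 1) ∧
      ∀ i, |(A *ᵥ x) i| ≤ 500 * spencerScale (Fintype.card κ) (Fintype.card ι) := by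
  induction hc : Fintype.card ι using Nat.strong_induction_on generalizing ι with
  | _ t ih =>
  subst hc
  rcases isEmpty_or_nonempty ι with hι | hι
  · exact ⟨0, isEmptyElim, fun i => by simp [spencerScale]⟩
  obtain ⟨y, hy, hcard, hydisc⟩ := exists_partial_coloring_spencerScale A hA
  have hpos : 0 < Fintype.card ι := Fintype.card_pos
  obtain ⟨z, hz, hzdisc⟩ := ih _ (by lia) (A.submatrix id (Subtype.val : {j // y j = 0} → ι))
    (fun i j => hA i j) rfl
  refine ⟨fun j => if h : y j = 0 then z ⟨j, h⟩ else y j, fun j => ?_, fun i => ?_⟩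
  · by_cases h : y j = 0
    · simpa only [dif_pos h] using hz ⟨j, h⟩
    · simpa only [dif_neg h] using (hy j).resolve_left h
  · have hcontract := spencerScale_le_of_le_three_fourths (Fintype.card κ)
      (t := Fintype.card ι) (k := Fintype.card {j // y j = 0}) (by exact_mod_cast hcard)
    rw [mulVec_dite_eq_zero, Pi.add_apply]
    linarith [abs_add_le ((A *ᵥ y) i) ((A.submatrix id Subtype.val *ᵥ z) i), hydisc i, hzdisc i]

end Recursion

/-- Spencer's theorem in the regime `T ≤ n`: for any `A ∈ [-1,1]^{n×T}` there is a sign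
vector `x ∈ {-1,+1}^T` with `‖Ax‖_∞ ≤ C √(T ln(e n / T))`. -/
theorem spencer_few_columns :
    ∃ C : ℝ, 0 < C ∧
      ∀ (n T : ℕ), 0 < T → T ≤ n →
        ∀ A : Matrix (Fin n) (Fin T) ℝ, (∀ i j, A i j ∈ Set.Icc (-1 : ℝ) 1) →
          ∃ x : Fin T → ℝ, (∀ j, x j = -1 ∨ x j = 1) ∧
            ∀ i, |A.mulVec x i| ≤
              C * Real.sqrt ((T : ℝ) * Real.log (Real.exp 1 * (n : ℝ) / (T : ℝ))) := by
  refine ⟨500, by norm_num, fun n T hT hTn A hA => ?_⟩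
  simpa only [Fintype.card_fin, spencerScale_of_le (Nat.cast_pos.2 hT) (Nat.cast_le.2 hTn)]
    using spencer_few_columns_general A hA
end
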